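/- For every even m ≥ 2 and every n > m, TC_n(ℝP^m) = TC^β_n(ℝP^m) = TC^Σ_n(ℝP^m) = nm+1, where ℝP^m is real projective m-space. -/

import Mathlib

open unitInterval

noncomputable section

/-- The point `j/(n-1)` of the unit interval, for `j : Fin n`.
These are the `n` evaluation points `0, 1/(n-1), …, (n-2)/(n-1), 1`. -/
def evalPt (n : ℕ) (j : Fin n) : unitInterval :=
  ⟨(j : ℝ) / ((n : ℝ) - 1), by
    have hn : 1 ≤ n := j.pos
    rcases eq_or_lt_of_le hn with h | h
    · have hn1 : n = 1 := h.symm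
      subst hn1
      simp [Fin.fin_one_eq_zero j]
    · have h1 : (0 : ℝ) < (n : ℝ) - 1 := by
        have : (1 : ℝ) < (n : ℝ) := by exact_mod_cast h
        linarith
      constructor
      · exact div_nonneg (Nat.cast_nonneg _) h1.le
      · rw [div_le_one h1]
        have hj : (j : ℕ) + 1 ≤ n := j.is_lt
        have : ((j : ℕ) : ℝ) + 1 ≤ (n : ℝ) := by exact_mod_cast hj
        linarith⟩

/-- Coordinate reversal (the involution `β`) on `n`-tuples:
`β·(x_1,…,x_n) = (x_n,…,x_1)`. -/
def rtuple {X : Type*} {n : ℕ} (x : Fin n → X) : Fin n → X := fun j => x j.rev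

/-- Path reversal (the involution `β`) on the free path space `C(I,X)`:
`(β·γ)(t) = γ(1-t)`. -/
def rpath {X : Type*} [TopologicalSpace X] (γ : C(unitInterval, X)) : C(unitInterval, X) :=
  γ.comp ⟨unitInterval.symm, unitInterval.continuous_symm⟩

/-- `X^n` can be covered by `k` open sets, on each of which there is a continuous
section of the evaluation map `e_n : C(I,X) → X^n`,
`γ ↦ (γ(0), γ(1/(n-1)), …, γ(1))`. -/
def HasPlanners (X : Type*) [TopologicalSpace X] (n k : ℕ) : Prop :=
  ∃ U : Fin k → Set (Fin n → X),
    (∀ i, IsOpen (U i)) ∧ (⋃ i, U i) = Set.univ ∧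
    (∀ i, ∃ s : C(U i, C(unitInterval, X)),
      ∀ x : U i, ∀ j : Fin n, s x (evalPt n j) = (x : Fin n → X) j)

/-- The `n`-th (ordinary, higher) topological complexity `TC_n(X)`, as a value in `ℕ∞`. -/
def TCn (X : Type*) [TopologicalSpace X] (n : ℕ) : ℕ∞ :=
  sInf {k : ℕ∞ | ∃ m : ℕ, (m : ℕ∞) = k ∧ HasPlanners X n m}

/-- `X^n` can be covered by `k` β-invariant open sets, on each of which there is a
continuous β-equivariant section of the evaluation map `e_n : C(I,X) → X^n`
(a bidirectional motion planner). -/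
def HasBidirPlanners (X : Type*) [TopologicalSpace X] (n k : ℕ) : Prop :=
  ∃ U : Fin k → Set (Fin n → X),
    (∀ i, IsOpen (U i)) ∧ (⋃ i, U i) = Set.univ ∧
    (∀ i, ∀ x ∈ U i, rtuple x ∈ U i) ∧
    (∀ i, ∃ s : C(U i, C(unitInterval, X)),
      (∀ x : U i, ∀ j : Fin n, s x (evalPt n j) = (x : Fin n → X) j) ∧
      (∀ x : U i, ∀ hx : rtuple (x : Fin n → X) ∈ U i,
        s ⟨rtuple (x : Fin n → X), hx⟩ = rpath (s x)))

/-- The `n`-th bidirectional topological complexity `TC^β_n(X)`, as a value in `ℕ∞`. -/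
def TCbeta (X : Type*) [TopologicalSpace X] (n : ℕ) : ℕ∞ :=
  sInf {k : ℕ∞ | ∃ m : ℕ, (m : ℕ∞) = k ∧ HasBidirPlanners X n m}

/-- The action of a permutation `sg ∈ Σ_n` on `n`-tuples (by permuting coordinates). -/
def permTuple {X : Type*} {n : ℕ} (sg : Equiv.Perm (Fin n)) (x : Fin n → X) : Fin n → X :=
  fun j => x (sg j)

/-- `X^n` can be covered by `k` `Σ_n`-invariant open sets, on each of which there is a
continuous `Σ_n`-equivariant section of `E_n : X^{J_n} → X^n`,
`(α_1,…,α_n) ↦ (α_1(1),…,α_n(1))`, where `X^{J_n}` is the space of `n`-tuples of paths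
with a common initial point. -/
def HasSymPlanners (X : Type*) [TopologicalSpace X] (n k : ℕ) : Prop :=
  ∃ U : Fin k → Set (Fin n → X),
    (∀ i, IsOpen (U i)) ∧ (⋃ i, U i) = Set.univ ∧
    (∀ i, ∀ sg : Equiv.Perm (Fin n), ∀ x ∈ U i, permTuple sg x ∈ U i) ∧
    (∀ i, ∃ s : C(U i, Fin n → C(unitInterval, X)),
      (∀ x : U i, ∀ j j' : Fin n, s x j 0 = s x j' 0) ∧
      (∀ x : U i, ∀ j : Fin n, s x j 1 = (x : Fin n → X) j) ∧
      (∀ x : U i, ∀ sg : Equiv.Perm (Fin n),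
        ∀ hx : permTuple sg (x : Fin n → X) ∈ U i,
        s ⟨permTuple sg (x : Fin n → X), hx⟩ = permTuple sg (s x)))

/-- The `n`-th symmetrized topological complexity `TC^Σ_n(X)`, as a value in `ℕ∞`. -/
def TCsym (X : Type*) [TopologicalSpace X] (n : ℕ) : ℕ∞ :=
  sInf {k : ℕ∞ | ∃ m : ℕ, (m : ℕ∞) = k ∧ HasSymPlanners X n m}

/-- The unit sphere `S^m ⊂ ℝ^{m+1}`. -/
abbrev Sph (m : ℕ) : Type :=
  Metric.sphere (0 : EuclideanSpace ℝ (Fin (m + 1))) 1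

end
noncomputable section

/-- The antipodal setoid on the sphere `S^m`, identifying `x` with `-x`. -/
def antipodalSetoid (m : ℕ) : Setoid (Sph m) where
  r x y := (x : EuclideanSpace ℝ (Fin (m + 1))) = (y : EuclideanSpace ℝ (Fin (m + 1))) ∨
    (x : EuclideanSpace ℝ (Fin (m + 1))) = -(y : EuclideanSpace ℝ (Fin (m + 1)))
  iseqv := by
    constructor
    · intro x; exact Or.inl rfl
    · intro x y h
      rcases h with h | h
      · exact Or.inl h.symm
      · exact Or.inr (by rw [h, neg_neg])
    · intro x y z h1 h2
      rcases h1 with h1 | h1 <;> rcases h2 with h2 | h2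
      · exact Or.inl (h1.trans h2)
      · exact Or.inr (h1.trans h2)
      · exact Or.inr (by rw [h1, h2])
      · exact Or.inl (by rw [h1, h2, neg_neg])

/-- Real projective `m`-space, the quotient of the unit sphere `S^m ⊂ ℝ^{m+1}`
by the antipodal involution. -/
def RP (m : ℕ) : Type := Quotient (antipodalSetoid m)

instance (m : ℕ) : TopologicalSpace (RP m) := instTopologicalSpaceQuotient

end



namespace RPTC

open Finset

noncomputable section

abbrev Idx (n m : ℕ) : Type := Fin n × Fin (m + 1)

abbrev Conf (n m : ℕ) : Type := Idx n m → ℤ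

/-- Faces of the product of `n` subdivided boundaries of cubes. -/
def InP {n m : ℕ} (K : ℕ) (F : Conf n m) : Prop :=
  ∀ i, (∀ a, |F (i, a)| ≤ 2 * (K : ℤ)) ∧ ∃ a, |F (i, a)| = 2 * (K : ℤ)

def sg (b : Bool) : ℤ := if b then 1 else -1

lemma sg_not (b : Bool) : sg (!b) = - sg b := by cases b <;> simp [sg]

lemma sg_cases (b : Bool) : sg b = 1 ∨ sg b = -1 := by cases b <;> simp [sg]

def mv {n m : ℕ} (F : Conf n m) (x : Idx n m × Bool) : Conf n m :=
  Function.update F x.1 (F x.1 + sg x.2)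

lemma mv_self {n m : ℕ} (F : Conf n m) (x : Idx n m × Bool) : mv F x x.1 = F x.1 + sg x.2 := by
  simp [mv]

lemma mv_ne {n m : ℕ} (F : Conf n m) (x : Idx n m × Bool) {p : Idx n m} (h : p ≠ x.1) :
    mv F x p = F p := by
  simp [mv, h]

def okm {n m : ℕ} (K : ℕ) (F : Conf n m) (x : Idx n m × Bool) : Prop :=
  Even (F x.1) ∧ InP K (mv F x)

open Classical in
def opA {n m : ℕ} (K : ℕ) (v : Conf n m → ZMod 2) : Conf n m → ZMod 2 := fun F =>
  ∑ x : Idx n m × Bool, if okm K F x then v (mv F x) else 0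

open Classical in
def opW {n m : ℕ} (K : ℕ) (g v : Conf n m → ZMod 2) : Conf n m → ZMod 2 := fun F =>
  ∑ x : Idx n m × Bool, if okm K F x then (g F + g (mv F x)) * v (mv F x) else 0

lemma opW_eq {n m : ℕ} (K : ℕ) (g v : Conf n m → ZMod 2) :
    opW K g v = g * opA K v + opA K (g * v) := by
  funext F
  simp only [opW, opA, Pi.add_apply, Pi.mul_apply, Finset.mul_sum, ← Finset.sum_add_distrib]
  refine Finset.sum_congr rfl fun x _ => ?_
  split_ifs <;> ring

lemma opA_add {n m : ℕ} (K : ℕ) (v w : Conf n m → ZMod 2) :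
    opA K (v + w) = opA K v + opA K w := by
  funext F
  simp only [opA, Pi.add_apply, ← Finset.sum_add_distrib]
  refine Finset.sum_congr rfl fun x _ => ?_
  split_ifs <;> ring

lemma opA_zero {n m : ℕ} (K : ℕ) : opA K (0 : Conf n m → ZMod 2) = 0 := by
  funext F
  simp [opA]

lemma odd_mv {n m : ℕ} {F : Conf n m} {x : Idx n m × Bool} (h : Even (F x.1)) :
    Odd (mv F x x.1) := by
  rw [mv_self]
  rcases sg_cases x.2 with h' | h' <;> rw [h']
  · exact h.add_one
  · exact h.add_odd (by decide)

/-- Lowering: the faces of a face are faces. -/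
lemma inP_of_mv {n m K : ℕ} {F : Conf n m} {x : Idx n m × Bool} (he : Even (F x.1))
    (h : InP K (mv F x)) : InP K F := by
  have ho := odd_mv he
  intro i
  obtain ⟨h1, a, ha⟩ := h i
  refine ⟨fun b => ?_, a, ?_⟩
  · by_cases hb : (i, b) = x.1
    · have := h1 b
      rw [hb] at this ⊢
      rw [mv_self] at this ho
      rcases sg_cases x.2 with h' | h' <;> rw [h'] at this ho <;> rw [abs_le] at * <;>
        obtain ⟨k, hk⟩ := he <;> obtain ⟨l, hl⟩ := ho <;> omega
    · have := h1 b
      rwa [mv_ne _ _ hb] at this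
  · by_cases hb : (i, a) = x.1
    · exfalso
      rw [hb] at ha
      obtain ⟨l, hl⟩ := ho
      rcases abs_cases (mv F x x.1) with h' | h' <;> omega
    · rwa [mv_ne _ _ hb] at ha

lemma mv_comm {n m : ℕ} (F : Conf n m) {x y : Idx n m × Bool} (h : x.1 ≠ y.1) :
    mv (mv F x) y = mv (mv F y) x := by
  funext p
  by_cases hx : p = x.1
  · subst hx
    rw [mv_ne _ _ h, mv_self, mv_self, mv_ne _ _ h]
  · by_cases hy : p = y.1
    · subst hy
      rw [mv_ne _ _ hx, mv_self, mv_self, mv_ne _ _ hx]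
    · rw [mv_ne _ _ hx, mv_ne _ _ hy, mv_ne _ _ hy, mv_ne _ _ hx]

lemma okm_ne {n m K : ℕ} {F : Conf n m} {x y : Idx n m × Bool} (hx : okm K F x)
    (hy : okm K (mv F x) y) : x.1 ≠ y.1 := by
  intro h
  have h1 := odd_mv hx.1
  have h2 := hy.1
  rw [← h] at h2
  exact (Int.not_even_iff_odd.mpr h1) h2

lemma okm_swap {n m K : ℕ} {F : Conf n m} {x y : Idx n m × Bool} (hx : okm K F x)
    (hy : okm K (mv F x) y) : okm K F y ∧ okm K (mv F y) x := by
  have hne := okm_ne hx hy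
  have h1 : Even (F y.1) := by
    have := hy.1
    rwa [mv_ne _ _ hne.symm] at this
  have h2 : Even (mv F y x.1) := by
    rw [mv_ne _ _ hne]
    exact hx.1
  have h3 : InP K (mv (mv F y) x) := by
    rw [← mv_comm _ hne]
    exact hy.2
  exact ⟨⟨h1, inP_of_mv h2 h3⟩, h2, h3⟩

lemma zmod2_add_self (a : ZMod 2) : a + a = 0 := CharTwo.add_self_eq_zero a

lemma opA_opA {n m : ℕ} (K : ℕ) (v : Conf n m → ZMod 2) : opA K (opA K v) = 0 := by
  classical
  funext F
  have : opA K (opA K v) F = ∑ xy : (Idx n m × Bool) × (Idx n m × Bool),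
      if okm K F xy.1 ∧ okm K (mv F xy.1) xy.2 then v (mv (mv F xy.1) xy.2) else 0 := by
    rw [Fintype.sum_prod_type]
    simp only [opA]
    refine Finset.sum_congr rfl fun x _ => ?_
    by_cases hx : okm K F x
    · simp only [hx, if_true, true_and]
    · simp [hx]
  rw [this, Pi.zero_apply]
  refine Finset.sum_involution (fun xy _ => (xy.2, xy.1)) ?_ ?_ ?_ ?_
  · rintro ⟨x, y⟩ _
    by_cases h : okm K F x ∧ okm K (mv F x) y
    · have h' := okm_swap h.1 h.2
      simp only [h, h', and_self, if_true]
      rw [mv_comm _ (okm_ne h.1 h.2)]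
      exact zmod2_add_self _
    · have h' : ¬ (okm K F y ∧ okm K (mv F y) x) := fun h' => h (okm_swap h'.1 h'.2)
      simp only [h, h', if_false, add_zero]
  · rintro ⟨x, y⟩ _ h heq
    simp only [Prod.mk.injEq] at heq
    have hc : okm K F x ∧ okm K (mv F x) y := by
      by_contra hc
      simp [hc] at h
    exact okm_ne hc.1 hc.2 (by rw [heq.1])
  · intros; simp
  · rintro ⟨x, y⟩ _; rfl

lemma opA_opW {n m : ℕ} (K : ℕ) (g v : Conf n m → ZMod 2) :
    opA K (opW K g v) = opW K g (opA K v) := by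
  rw [opW_eq, opW_eq, opA_add, opA_opA, opA_opA]
  simp

/-! ### The top-dimensional vector -/

def rk {n m : ℕ} (F : Conf n m) : ℕ :=
  ∑ i, (univ.filter fun a => Odd (F (i, a))).card

open Classical in
def uu {n m : ℕ} (K : ℕ) : Conf n m → ZMod 2 := fun F =>
  if InP K F ∧ rk F = n * m then 1 else 0

lemma rk_unique {n m K : ℕ} {F : Conf n m} (h : InP K F) (hr : rk F = n * m) (i : Fin n) :
    ∃ c, |F (i, c)| = 2 * (K : ℤ) ∧ ∀ a, Even (F (i, a)) → a = c := by
  classical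
  have hle : ∀ i ∈ (univ : Finset (Fin n)),
      (univ.filter fun a => Odd (F (i, a))).card ≤ m := by
    intro i _
    obtain ⟨-, a, ha⟩ := h i
    have hlt : (univ.filter fun a => Odd (F (i, a))) ⊂ univ := by
      refine Finset.filter_ssubset.mpr ⟨a, mem_univ _, ?_⟩
      rintro ⟨l, hl⟩
      rcases abs_cases (F (i, a)) with h' | h' <;> omega
    have := Finset.card_lt_card hlt
    rw [Finset.card_univ, Fintype.card_fin] at this
    omega
  have hsum : ∑ i, (univ.filter fun a => Odd (F (i, a))).card = ∑ i : Fin n, m := by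
    simpa [rk] using hr
  have heq := (Finset.sum_eq_sum_iff_of_le hle).mp hsum i (mem_univ _)
  obtain ⟨-, c, hc⟩ := h i
  refine ⟨c, hc, ?_⟩
  have hcard : (univ.filter fun a => Even (F (i, a))).card = 1 := by
    have := Finset.card_filter_add_card_filter_not (s := (univ : Finset (Fin (m + 1))))
      (fun a => Odd (F (i, a)))
    rw [heq, Finset.card_univ, Fintype.card_fin] at this
    simp only [Int.not_odd_iff_even] at this
    omega
  obtain ⟨d, hd⟩ := Finset.card_eq_one.mp hcard
  have hce : Even (F (i, c)) := by
    rcases abs_cases (F (i, c)) with h' | h'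
    · exact ⟨K, by omega⟩
    · exact ⟨-K, by omega⟩
  have key : ∀ a, Even (F (i, a)) → a = d := by
    intro a ha
    have : a ∈ (univ.filter fun a => Even (F (i, a))) := by simp [ha]
    rw [hd] at this
    simpa using this
  intro a ha
  rw [key a ha, key c hce]

lemma rk_mv {n m : ℕ} {F : Conf n m} {x : Idx n m × Bool} (h : Even (F x.1)) :
    rk (mv F x) = rk F + 1 := by
  classical
  have ho := odd_mv h
  obtain ⟨⟨i, a⟩, b⟩ := x
  unfold rk
  rw [← Finset.add_sum_erase _ _ (mem_univ i),
    ← Finset.add_sum_erase univ (fun i => (univ.filter fun a => Odd (F (i, a))).card) (mem_univ i)]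
  have h1 : ∑ j ∈ univ.erase i, (univ.filter fun c => Odd (mv F ((i, a), b) (j, c))).card
      = ∑ j ∈ univ.erase i, (univ.filter fun c => Odd (F (j, c))).card := by
    refine Finset.sum_congr rfl fun j hj => ?_
    have hj' : j ≠ i := (Finset.mem_erase.mp hj).1
    congr 1
    refine Finset.filter_congr fun c _ => ?_
    rw [mv_ne]
    simp [hj']
  have h2 : (univ.filter fun c => Odd (mv F ((i, a), b) (i, c)))
      = insert a (univ.filter fun c => Odd (F (i, c))) := by
    ext c
    simp only [mem_filter, mem_univ, true_and, mem_insert]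
    by_cases hc : c = a
    · subst hc
      simpa using ho
    · rw [mv_ne]
      · simp [hc]
      · simp [hc]
  rw [h1, h2, Finset.card_insert_of_notMem]
  · ring
  · simp only [mem_filter, mem_univ, true_and]
    intro ho'
    exact (Int.not_even_iff_odd.mpr ho') h

open Classical in
/-- The other even coordinate in the block. -/
def oth {n m : ℕ} (F : Conf n m) (i : Fin n) (a : Fin (m + 1)) : Fin (m + 1) :=
  if h : ∃ c, c ≠ a ∧ Even (F (i, c)) then h.choose else a

open Classical in
def partner {n m : ℕ} (K : ℕ) (F : Conf n m) (x : Idx n m × Bool) : Idx n m × Bool :=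
  if |F x.1| = 2 * (K : ℤ) then
    ((x.1.1, oth F x.1.1 x.1.2), decide (F (x.1.1, oth F x.1.1 x.1.2) < 0))
  else (x.1, !x.2)

lemma opA_uu {n m : ℕ} (K : ℕ) (hK : 1 ≤ K) : opA K (uu K : Conf n m → ZMod 2) = 0 := by
  classical
  funext F
  have e1 : opA K (uu K) F = ∑ x ∈ univ.filter
      (fun x : Idx n m × Bool => okm K F x ∧ rk (mv F x) = n * m), (1 : ZMod 2) := by
    rw [Finset.sum_filter]
    unfold opA
    refine Finset.sum_congr rfl fun x _ => ?_
    by_cases hx : okm K F x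
    · simp [uu, hx, hx.2]
    · simp [hx]
  rw [e1, Pi.zero_apply]
  -- structure of the good moves
  have str : ∀ x : Idx n m × Bool, okm K F x → rk (mv F x) = n * m →
      oth F x.1.1 x.1.2 ≠ x.1.2 ∧ |F (x.1.1, oth F x.1.1 x.1.2)| = 2 * (K : ℤ) ∧
      (∀ c, Even (F (x.1.1, c)) → c = x.1.2 ∨ c = oth F x.1.1 x.1.2) ∧
      (|F x.1| = 2 * (K : ℤ) → x.2 = decide (F x.1 < 0)) := by
    rintro ⟨⟨i, a⟩, b⟩ hx hr
    obtain ⟨c, hc, hu⟩ := rk_unique hx.2 hr i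
    have hev : Even (F (i, a)) := hx.1
    have ho := odd_mv hx.1
    have hca : c ≠ a := by
      rintro rfl
      obtain ⟨l, hl⟩ := ho
      simp only at hl
      rcases abs_cases (mv F ((i, c), b) (i, c)) with h' | h' <;> omega
    have hmc : ∀ d, d ≠ a → mv F ((i, a), b) (i, d) = F (i, d) := by
      intro d hd
      rw [mv_ne]
      simp [hd]
    rw [hmc c hca] at hc
    have hce : Even (F (i, c)) := by
      rcases abs_cases (F (i, c)) with h' | h'
      · exact ⟨K, by omega⟩
      · exact ⟨-K, by omega⟩
    have hex : ∃ c, c ≠ a ∧ Even (F (i, c)) := ⟨c, hca, hce⟩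
    have hoc : oth F i a = c := by
      unfold oth
      rw [dif_pos hex]
      have h2 := hex.choose_spec
      refine hu _ ?_
      rw [hmc _ h2.1]
      exact h2.2
    simp only [hoc]
    refine ⟨hca, hc, ?_, ?_⟩
    · intro d hd
      by_cases hda : d = a
      · exact Or.inl hda
      · right
        refine hu _ ?_
        rwa [hmc _ hda]
    · intro h2
      have h3 := (hx.2 i).1 a
      have h4 := mv_self F ((i, a), b)
      simp only at h4
      rw [h4] at h3
      cases b
      · simp only [sg] at h3
        rcases abs_cases (F (i, a)) with h' | h'
        · simp; omega
        · rw [abs_le] at h3; simp at h3; omega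
      · simp only [sg] at h3
        rcases abs_cases (F (i, a)) with h' | h'
        · rw [abs_le] at h3; simp at h3; omega
        · simp; omega
  have hmem : ∀ x ∈ univ.filter
      (fun x : Idx n m × Bool => okm K F x ∧ rk (mv F x) = n * m),
      partner K F x ∈ univ.filter
      (fun x : Idx n m × Bool => okm K F x ∧ rk (mv F x) = n * m) := by
    intro x hx
    simp only [mem_filter, mem_univ, true_and] at hx ⊢
    obtain ⟨h1, h2, h3, h4⟩ := str x hx.1 hx.2
    obtain ⟨⟨i, a⟩, b⟩ := x
    simp only at h1 h2 h3 h4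
    have hP : InP K F := inP_of_mv hx.1.1 hx.1.2
    have hrk := rk_mv hx.1.1
    unfold partner
    split_ifs with hif
    · simp only at hif ⊢
      set c := oth F i a with hcdef
      have hce : Even (F (i, c)) := by
        rcases abs_cases (F (i, c)) with h' | h'
        · exact ⟨K, by omega⟩
        · exact ⟨-K, by omega⟩
      refine ⟨⟨hce, ?_⟩, ?_⟩
      · intro j
        refine ⟨fun d => ?_, ?_⟩
        · by_cases hd : (j, d) = (i, c)
          · rw [hd]
            have h5 := mv_self F ((i, c), decide (F (i, c) < 0))
            simp only at h5
            rw [h5]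
            rcases abs_cases (F (i, c)) with h' | h'
            · have : ¬ F (i, c) < 0 := by omega
              simp only [this, decide_false, sg]
              rw [abs_le]; simp; omega
            · have : F (i, c) < 0 := by omega
              simp only [this, decide_true, sg]
              rw [abs_le]; simp; omega
          · rw [mv_ne _ _ hd]
            exact (hP j).1 d
        · by_cases hj : j = i
          · subst hj
            refine ⟨a, ?_⟩
            rw [mv_ne]
            · exact hif
            · simp [h1.symm]
          · obtain ⟨-, d, hd⟩ := hP j
            refine ⟨d, ?_⟩
            rw [mv_ne]
            · exact hd
            · simp [hj]
      · rw [rk_mv hce, ← hx.2, hrk]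
    · simp only at hif ⊢
      refine ⟨⟨hx.1.1, ?_⟩, ?_⟩
      · intro j
        refine ⟨fun d => ?_, ?_⟩
        · by_cases hd : (j, d) = (i, a)
          · rw [hd]
            have h5 := mv_self F ((i, a), !b)
            simp only at h5
            rw [h5]
            have h6 := (hP i).1 a
            rcases sg_cases (!b) with h' | h' <;> rw [h'] <;>
              rcases abs_cases (F (i, a)) with h7 | h7 <;> rw [abs_le] <;> omega
          · rw [mv_ne _ _ hd]
            exact (hP j).1 d
        · by_cases hj : j = i
          · subst hj
            refine ⟨oth F j a, ?_⟩
            rw [mv_ne]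
            · exact h2
            · simp [h1]
          · obtain ⟨-, d, hd⟩ := hP j
            refine ⟨d, ?_⟩
            rw [mv_ne]
            · exact hd
            · simp [hj]
      · have h8 : Even (F (((i, a), !b) : Idx n m × Bool).1) := hx.1.1
        rw [rk_mv h8, ← hx.2, hrk]
  refine Finset.sum_involution (fun x _ => partner K F x) ?_ ?_ hmem ?_
  · intros; exact zmod2_add_self _
  · intro x hx _ heq
    simp only [mem_filter, mem_univ, true_and] at hx
    obtain ⟨h1, h2, h3, h4⟩ := str x hx.1 hx.2
    obtain ⟨⟨i, a⟩, b⟩ := x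
    unfold partner at heq
    split_ifs at heq with hif
    · simp only [Prod.mk.injEq, true_and] at heq
      exact h1 heq.1
    · simp at heq
  · intro x hx
    have hx' := hmem x hx
    simp only [mem_filter, mem_univ, true_and] at hx hx'
    obtain ⟨h1, h2, h3, h4⟩ := str x hx.1 hx.2
    obtain ⟨k1, k2, k3, k4⟩ := str _ hx'.1 hx'.2
    obtain ⟨⟨i, a⟩, b⟩ := x
    simp only at h1 h2 h3 h4
    by_cases hif : |F (i, a)| = 2 * (K : ℤ)
    · have e2 : partner K F ((i, a), b) = ((i, oth F i a), decide (F (i, oth F i a) < 0)) := by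
        simp [partner, hif]
      rw [e2] at k1 k2 k3 k4 ⊢
      simp only at k1 k2 k3 k4
      have e3 : oth F i (oth F i a) = a := by
        rcases k3 a hx.1.1 with h5 | h5
        · exact absurd h5.symm h1
        · exact h5.symm
      have e4 : partner K F ((i, oth F i a), decide (F (i, oth F i a) < 0))
          = ((i, a), decide (F (i, a) < 0)) := by
        simp [partner, h2, e3]
      rw [e4, h4 hif]
    · simp [partner, hif]

end

end RPTC


namespace RPTC

open Finset

noncomputable section

/-! ### The group action -/

def fl {n m : ℕ} (l : Fin n) (F : Conf n m) : Conf n m := fun p => if p.1 = l then - F p else F p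

def flx {n m : ℕ} (l : Fin n) (x : Idx n m × Bool) : Idx n m × Bool :=
  (x.1, if x.1.1 = l then !x.2 else x.2)

lemma flx_invol {n m : ℕ} (l : Fin n) : Function.Involutive (flx l : Idx n m × Bool → _) := by
  rintro ⟨⟨i, a⟩, b⟩
  by_cases h : i = l <;> simp [flx, h]

lemma fl_fl {n m : ℕ} (l : Fin n) (F : Conf n m) : fl l (fl l F) = F := by
  funext p
  by_cases h : p.1 = l <;> simp [fl, h]

lemma abs_fl {n m : ℕ} (l : Fin n) (F : Conf n m) (p : Idx n m) : |fl l F p| = |F p| := by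
  by_cases h : p.1 = l <;> simp [fl, h]

lemma even_fl {n m : ℕ} (l : Fin n) (F : Conf n m) (p : Idx n m) :
    Even (fl l F p) ↔ Even (F p) := by
  by_cases h : p.1 = l <;> simp [fl, h]

lemma inP_fl {n m K : ℕ} (l : Fin n) (F : Conf n m) : InP K (fl l F) ↔ InP K F := by
  simp only [InP, abs_fl]

lemma fl_mv {n m : ℕ} (l : Fin n) (F : Conf n m) (x : Idx n m × Bool) :
    fl l (mv F x) = mv (fl l F) (flx l x) := by
  funext p
  by_cases hp : p = x.1
  · subst hp
    have h1 := mv_self (fl l F) (flx l x)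
    have h2 : (flx l x).1 = x.1 := rfl
    rw [h2] at h1
    rw [h1]
    unfold fl
    rw [mv_self]
    by_cases h : x.1.1 = l
    · simp only [h, if_true, flx, sg_not]; ring
    · simp only [h, if_false, flx]
  · have hp' : p ≠ (flx l x).1 := hp
    rw [mv_ne _ _ hp']
    unfold fl
    rw [mv_ne _ _ hp]

lemma okm_fl {n m K : ℕ} (l : Fin n) (F : Conf n m) (x : Idx n m × Bool) :
    okm K (fl l F) (flx l x) ↔ okm K F x := by
  unfold okm
  rw [← fl_mv, inP_fl]
  have h2 : (flx l x).1 = x.1 := rfl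
  rw [h2, even_fl]

lemma rk_fl {n m : ℕ} (l : Fin n) (F : Conf n m) : rk (fl l F) = rk F := by
  simp only [rk, ← Int.not_even_iff_odd, even_fl]

def Inv {n m : ℕ} (K : ℕ) (v : Conf n m → ZMod 2) : Prop :=
  ∀ F, InP K F → ∀ l, v (fl l F) = v F

def Tw {n m : ℕ} (K : ℕ) (g : Conf n m → ZMod 2) : Prop :=
  ∃ c : Fin n → ZMod 2, ∀ F, InP K F → ∀ l, g (fl l F) = g F + c l

lemma inv_uu {n m : ℕ} (K : ℕ) : Inv K (uu K : Conf n m → ZMod 2) := by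
  classical
  intro F _ l
  exact if_congr (by rw [inP_fl, rk_fl]) rfl rfl

lemma Inv.mul {n m K : ℕ} {v w : Conf n m → ZMod 2} (hv : Inv K v) (hw : Inv K w) :
    Inv K (v * w) := by
  intro F hF l
  simp only [Pi.mul_apply, hv F hF l, hw F hF l]

lemma inv_opW {n m K : ℕ} {g v : Conf n m → ZMod 2} (hg : Tw K g) (hv : Inv K v) :
    Inv K (opW K g v) := by
  classical
  obtain ⟨c, hc⟩ := hg
  intro F hF l
  unfold opW
  rw [← Equiv.sum_comp ((flx_invol l).toPerm)]
  refine Finset.sum_congr rfl fun x _ => ?_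
  simp only [Function.Involutive.coe_toPerm, okm_fl, ← fl_mv]
  by_cases h : okm K F x
  · simp only [h, if_true]
    rw [hv _ h.2, hc _ h.2, hc _ hF]
    congr 1
    have := zmod2_add_self (c l)
    linear_combination this
  · simp only [h, if_false]

/-! ### Signs of the leading coordinate -/

def Ng {n m : ℕ} (i : Fin n) (F : Conf n m) : Prop := ∃ a, F (i, a) < 0 ∧ ∀ b < a, F (i, b) = 0

open Classical in
def sgm {n m : ℕ} (i : Fin n) (F : Conf n m) : ZMod 2 := if Ng i F then 1 else 0

lemma exists_lead {n m K : ℕ} (hK : 1 ≤ K) {F : Conf n m} (hF : InP K F) (i : Fin n) :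
    ∃ a, F (i, a) ≠ 0 ∧ ∀ b < a, F (i, b) = 0 := by
  classical
  obtain ⟨-, c, hc⟩ := hF i
  have hne : (univ.filter fun a => F (i, a) ≠ 0).Nonempty := by
    refine ⟨c, ?_⟩
    simp only [mem_filter, mem_univ, true_and]
    intro h0
    rw [h0] at hc
    simp at hc
    omega
  refine ⟨(univ.filter fun a => F (i, a) ≠ 0).min' hne, ?_, ?_⟩
  · have := Finset.min'_mem _ hne
    simpa using this
  · intro b hb
    by_contra hb0
    have := Finset.min'_le (univ.filter fun a => F (i, a) ≠ 0) b (by simpa using hb0)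
    exact absurd hb (not_lt.mpr this)

lemma sgm_of_lead {n m : ℕ} {F : Conf n m} {i : Fin n} {a : Fin (m + 1)}
    (h1 : F (i, a) ≠ 0) (h2 : ∀ b < a, F (i, b) = 0) :
    sgm i F = if F (i, a) < 0 then 1 else 0 := by
  unfold sgm
  congr 1
  refine propext ⟨?_, fun h => ⟨a, h, h2⟩⟩
  rintro ⟨c, hc1, hc2⟩
  rcases lt_trichotomy a c with h | h | h
  · exact absurd (hc2 a h) h1
  · rwa [h]
  · rw [h2 c h] at hc1
    exact absurd hc1 (lt_irrefl _)

lemma sgm_fl {n m K : ℕ} (hK : 1 ≤ K) {F : Conf n m} (hF : InP K F) (i l : Fin n) :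
    sgm i (fl l F) = sgm i F + if l = i then 1 else 0 := by
  obtain ⟨a, h1, h2⟩ := exists_lead hK hF i
  rw [sgm_of_lead h1 h2]
  by_cases h : i = l
  · subst h
    have e : ∀ b, fl i F (i, b) = - F (i, b) := by intro b; simp [fl]
    rw [sgm_of_lead (a := a) (by rw [e]; simpa using h1) (by intro b hb; rw [e, h2 b hb]; simp), e]
    rcases lt_or_gt_of_ne h1 with h3 | h3
    · simp [h3, h3.le, not_lt.mpr]; rfl
    · simp [h3, h3.le, not_lt.mpr]
  · have e : ∀ b, fl l F (i, b) = F (i, b) := by intro b; simp [fl, h]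
    rw [sgm_of_lead (a := a) (by rw [e]; exact h1) (by intro b hb; rw [e, h2 b hb]), e]
    simp [Ne.symm h]

/-! ### The fundamental domain -/

open Classical in
def D0 (n m K : ℕ) : Finset (Conf n m) :=
  (Fintype.piFinset (fun _ => Finset.Icc (-(2 * (K : ℤ))) (2 * (K : ℤ)))).filter
    (fun F => InP K F ∧ (∀ p, Even (F p)) ∧ ∀ i, sgm i F = 0)

lemma mem_D0 {n m K : ℕ} {F : Conf n m} :
    F ∈ D0 n m K ↔ InP K F ∧ (∀ p, Even (F p)) ∧ ∀ i, sgm i F = 0 := by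
  unfold D0
  simp only [mem_filter, Fintype.mem_piFinset, Finset.mem_Icc, and_iff_right_iff_imp]
  rintro ⟨h, -, -⟩ ⟨i, a⟩
  exact abs_le.mp ((h i).1 a)

def rv {n m : ℕ} (x : Idx n m × Bool) : Idx n m × Bool := (x.1, !x.2)

lemma rv_rv {n m : ℕ} (x : Idx n m × Bool) : rv (rv x) = x := by simp [rv]

lemma mv_rv {n m : ℕ} (F : Conf n m) (x : Idx n m × Bool) : mv (mv F x) (rv x) = F := by
  funext p
  by_cases hp : p = x.1
  · subst hp
    have := mv_self (mv F x) (rv x)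
    have e : (rv x).1 = x.1 := rfl
    rw [e] at this
    rw [this, mv_self]
    simp [rv, sg_not]
  · have hp' : p ≠ (rv x).1 := hp
    rw [mv_ne _ _ hp', mv_ne _ _ hp]

lemma flx_self {n m : ℕ} (x : Idx n m × Bool) : flx x.1.1 x = rv x := by
  simp [flx, rv]

lemma sum_D0_opA {n m K : ℕ} (hK : 1 ≤ K) {v : Conf n m → ZMod 2} (hv : Inv K v) :
    ∑ F ∈ D0 n m K, opA K v F = 0 := by
  classical
  have e1 : ∑ F ∈ D0 n m K, opA K v F =
      ∑ y ∈ (D0 n m K ×ˢ (univ : Finset (Idx n m × Bool))).filter (fun y => okm K y.1 y.2),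
        v (mv y.1 y.2) := by
    rw [Finset.sum_filter, Finset.sum_product]
    rfl
  rw [e1]
  -- the involution
  let J : Conf n m × (Idx n m × Bool) → Conf n m × (Idx n m × Bool) := fun y =>
    if sgm y.2.1.1 (mv (mv y.1 y.2) y.2) = 0 then (mv (mv y.1 y.2) y.2, rv y.2)
    else (fl y.2.1.1 (mv (mv y.1 y.2) y.2), y.2)
  have basic : ∀ F x, F ∈ D0 n m K → okm K F x →
      InP K (mv (mv F x) x) ∧ okm K (mv (mv F x) x) (rv x) ∧
      (∀ p, Even (mv (mv F x) x p)) ∧ (∀ i, i ≠ x.1.1 → sgm i (mv (mv F x) x) = 0) ∧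
      mv (mv (mv F x) x) (rv x) = mv F x := by
    intro F x hF hx
    obtain ⟨hP, hE, hS⟩ := mem_D0.mp hF
    have hb := mv_rv (mv F x) x
    have hE2 : ∀ p, Even (mv (mv F x) x p) := by
      intro p
      by_cases hp : p = x.1
      · subst hp
        rw [mv_self, mv_self]
        obtain ⟨k, hk⟩ := hE x.1
        exact ⟨k + sg x.2, by omega⟩
      · rw [mv_ne _ _ hp, mv_ne _ _ hp]
        exact hE p
    have hok : okm K (mv (mv F x) x) (rv x) := ⟨hE2 _, by rw [hb]; exact hx.2⟩
    refine ⟨inP_of_mv hok.1 hok.2, hok, hE2, ?_, hb⟩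
    intro i hi
    rw [← hS i]
    have e : ∀ b, mv (mv F x) x (i, b) = F (i, b) := by
      intro b
      have : (i, b) ≠ x.1 := by
        intro h
        exact hi (by rw [← h])
      rw [mv_ne _ _ this, mv_ne _ _ this]
    exact if_congr (by simp only [Ng, e]) rfl rfl
  have hmem : ∀ y ∈ (D0 n m K ×ˢ (univ : Finset (Idx n m × Bool))).filter
      (fun y => okm K y.1 y.2), J y ∈ (D0 n m K ×ˢ (univ : Finset (Idx n m × Bool))).filter
      (fun y => okm K y.1 y.2) := by
    rintro ⟨F, x⟩ hy
    simp only [mem_filter, mem_product, mem_univ, and_true] at hy ⊢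
    obtain ⟨b1, b2, b3, b4, b5⟩ := basic F x hy.1 hy.2
    simp only [J]
    split_ifs with hs
    · refine ⟨mem_D0.mpr ⟨b1, b3, fun i => ?_⟩, b2⟩
      by_cases hi : i = x.1.1
      · rw [hi]; exact hs
      · exact b4 i hi
    · refine ⟨mem_D0.mpr ⟨(inP_fl _ _).mpr b1, fun p => (even_fl _ _ _).mpr (b3 p), fun i => ?_⟩, ?_⟩
      · simp only
        rw [sgm_fl hK b1]
        by_cases hi : i = x.1.1
        · rw [hi]
          simp only [if_true]
          have : ∀ a : ZMod 2, a ≠ 0 → a + 1 = 0 := by decide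
          exact this _ hs
        · rw [b4 i hi, if_neg (Ne.symm hi), add_zero]
      · have := (okm_fl (K := K) x.1.1 (mv (mv F x) x) (rv x)).mpr b2
        have e : flx x.1.1 (rv x) = x := by
          have := flx_self (rv x)
          rw [rv_rv] at this
          exact this
        rw [e] at this
        exact this
  refine Finset.sum_involution (fun y _ => J y) ?_ ?_ hmem ?_
  · rintro ⟨F, x⟩ hy
    simp only [mem_filter, mem_product, mem_univ, and_true] at hy
    obtain ⟨b1, b2, b3, b4, b5⟩ := basic F x hy.1 hy.2
    suffices h : v (mv (J (F, x)).1 (J (F, x)).2) = v (mv F x) by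
      rw [h]; exact zmod2_add_self _
    simp only [J]
    split_ifs with hs
    · simp only
      rw [b5]
    · simp only
      have e : flx x.1.1 (rv x) = x := by
        have := flx_self (rv x)
        rw [rv_rv] at this
        exact this
      have e2 := fl_mv x.1.1 (mv (mv F x) x) (rv x)
      rw [e, b5] at e2
      rw [← e2]
      exact hv _ hy.2.2 _
  · rintro ⟨F, x⟩ hy _ heq
    simp only [mem_filter, mem_product, mem_univ, and_true] at hy
    obtain ⟨b1, b2, b3, b4, b5⟩ := basic F x hy.1 hy.2
    simp only [J] at heq
    split_ifs at heq with hs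
    · have := congrArg (fun z => z.2.2) heq
      simp [rv] at this
    · have h1 := congrArg (fun z => z.1 x.1) heq
      simp only [fl, if_true, mv_self] at h1
      obtain ⟨k, hk⟩ := hy.2.1
      rcases sg_cases x.2 with h' | h' <;> rw [h'] at h1 <;> omega
  · rintro ⟨F, x⟩ hy
    simp only [mem_filter, mem_product, mem_univ, and_true] at hy
    obtain ⟨b1, b2, b3, b4, b5⟩ := basic F x hy.1 hy.2
    obtain ⟨hP, hE, hS⟩ := mem_D0.mp hy.1
    by_cases hs : sgm x.1.1 (mv (mv F x) x) = 0
    · have e1 : J (F, x) = (mv (mv F x) x, rv x) := by simp only [J, hs, if_true]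
      have e2 : mv (mv (mv (mv F x) x) (rv x)) (rv x) = F := by
        rw [b5, mv_rv]
      have e3 : (rv x).1 = x.1 := rfl
      rw [e1]
      simp only [J, e2, e3, hS, if_true, rv_rv]
    · have e1 : J (F, x) = (fl x.1.1 (mv (mv F x) x), x) := by simp only [J, hs, if_false]
      have e : flx x.1.1 (rv x) = x := by
        have := flx_self (rv x)
        rw [rv_rv] at this
        exact this
      have e2 := fl_mv x.1.1 (mv (mv F x) x) (rv x)
      rw [e, b5] at e2
      have e3 := fl_mv x.1.1 (mv F x) (rv x)
      rw [e, mv_rv] at e3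
      have e4 : sgm x.1.1 (fl x.1.1 F) ≠ 0 := by
        rw [sgm_fl hK hP, hS]
        simp
      rw [e1]
      simp only [J, ← e2, ← e3, e4, if_false, fl_fl]

/-! ### Iterated operators -/

def fold {n m : ℕ} (K : ℕ) (gs : List (Conf n m → ZMod 2)) (w : Conf n m → ZMod 2) :
    Conf n m → ZMod 2 := gs.foldr (opW K) w

lemma fold_cons {n m : ℕ} (K : ℕ) (g) (gs : List (Conf n m → ZMod 2)) (w : Conf n m → ZMod 2) :
    fold K (g :: gs) w = opW K g (fold K gs w) := rfl

lemma fold_append {n m : ℕ} (K : ℕ) (gs hs : List (Conf n m → ZMod 2)) (w : Conf n m → ZMod 2) :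
    fold K (gs ++ hs) w = fold K gs (fold K hs w) := by
  simp [fold]

lemma fold_add {n m : ℕ} (K : ℕ) (gs : List (Conf n m → ZMod 2)) (w w' : Conf n m → ZMod 2) :
    fold K gs (w + w') = fold K gs w + fold K gs w' := by
  induction gs with
  | nil => rfl
  | cons g gs ih =>
    rw [fold_cons, fold_cons, fold_cons, ih, opW_eq, opW_eq, opW_eq, mul_add, opA_add, opA_add]
    ring

lemma fold_opA {n m : ℕ} (K : ℕ) (gs : List (Conf n m → ZMod 2)) (w : Conf n m → ZMod 2) :
    fold K gs (opA K w) = opA K (fold K gs w) := by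
  induction gs with
  | nil => rfl
  | cons g gs ih => rw [fold_cons, fold_cons, ih, opA_opW]

lemma fold_zero {n m : ℕ} (K : ℕ) (gs : List (Conf n m → ZMod 2)) :
    fold K gs (0 : Conf n m → ZMod 2) = 0 := by
  have := fold_opA K gs (0 : Conf n m → ZMod 2)
  induction gs with
  | nil => rfl
  | cons g gs ih =>
    rw [fold_cons, ih (fold_opA K gs 0), opW_eq, mul_zero, opA_zero]
    simp

lemma inv_fold {n m K : ℕ} {gs : List (Conf n m → ZMod 2)} (hg : ∀ g ∈ gs, Tw K g)
    {w : Conf n m → ZMod 2} (hw : Inv K w) : Inv K (fold K gs w) := by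
  induction gs with
  | nil => exact hw
  | cons g gs ih =>
    rw [fold_cons]
    exact inv_opW (hg g (by simp)) (ih fun g' hg' => hg g' (by simp [hg']))

def SS {n m : ℕ} (K : ℕ) (gs : List (Conf n m → ZMod 2)) : ZMod 2 :=
  ∑ F ∈ D0 n m K, fold K gs (uu K) F

lemma SS_kill {n m K : ℕ} (hK : 1 ≤ K) {gs hs : List (Conf n m → ZMod 2)}
    (hg : ∀ g ∈ gs, Tw K g) (hh : ∀ g ∈ hs, Tw K g) {h : Conf n m → ZMod 2} (hI : Inv K h) :
    SS K (gs ++ h :: hs) = 0 := by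
  unfold SS
  have e1 : opA K (fold K hs (uu K)) = 0 := by
    rw [← fold_opA, opA_uu K hK, fold_zero]
  have : fold K (gs ++ h :: hs) (uu K) = opA K (fold K gs (h * fold K hs (uu K))) := by
    rw [fold_append, fold_cons, opW_eq, e1, mul_zero, zero_add, fold_opA]
  rw [this]
  exact sum_D0_opA hK (inv_fold hg (hI.mul (inv_fold hh (inv_uu K))))

lemma SS_congr {n m K : ℕ} (hK : 1 ≤ K) {gs gs' : List (Conf n m → ZMod 2)}
    (h : List.Forall₂ (fun g g' => Tw K g ∧ Tw K g' ∧ Inv K (g + g')) gs gs') :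
    ∀ pre : List (Conf n m → ZMod 2), (∀ g ∈ pre, Tw K g) → SS K (pre ++ gs) = SS K (pre ++ gs') := by
  induction h with
  | nil => intro pre _; rfl
  | @cons g g' l l' hgg hll ih =>
    intro pre hpre
    have hl : ∀ g ∈ l, Tw K g := by
      clear ih
      induction hll with
      | nil => simp
      | cons h1 _ ih => 
        intro g hg
        rcases List.mem_cons.mp hg with h2 | h2
        · rw [h2]; exact h1.1
        · exact ih g h2
    have e1 : SS K (pre ++ g :: l) = SS K (pre ++ g' :: l) := by
      have e2 : SS K (pre ++ g :: l) + SS K (pre ++ g' :: l) = SS K (pre ++ (g + g') :: l) := by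
        unfold SS
        rw [← Finset.sum_add_distrib]
        refine Finset.sum_congr rfl fun F _ => ?_
        rw [← Pi.add_apply]
        rw [fold_append, fold_append, fold_append, fold_cons, fold_cons, fold_cons, ← fold_add]
        congr 1
        rw [opW_eq, opW_eq, opW_eq, add_mul, add_mul, opA_add]
        ring
      rw [SS_kill hK hpre hl hgg.2.2] at e2
      have : ∀ a b : ZMod 2, a + b = 0 → a = b := by decide
      exact this _ _ e2
    rw [e1]
    have := ih (pre ++ [g']) (by
      intro g0 hg0
      rcases List.mem_append.mp hg0 with h2 | h2
      · exact hpre _ h2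
      · rw [List.mem_singleton.mp h2]; exact hgg.2.1)
    simpa using this

/-! ### Extracting chains -/

def close1 {n m : ℕ} (F0 F : Conf n m) : Prop := ∀ p, |F p - F0 p| ≤ 1

lemma fold_chain {n m K : ℕ} (F0 : Conf n m) : ∀ (gs : List (Conf n m → ZMod 2)) (F : Conf n m),
    InP K F → (∀ p, F p = F0 p ∨ (Odd (F p) ∧ |F p - F0 p| ≤ 1)) → fold K gs (uu K) F ≠ 0 →
    ∀ g ∈ gs, ∃ G G', InP K G ∧ InP K G' ∧ close1 F0 G ∧ close1 F0 G' ∧ g G ≠ g G' := by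
  classical
  intro gs
  induction gs with
  | nil => intro F _ _ _ g hg; simp at hg
  | cons g gs ih =>
    intro F hF hcl hne
    rw [fold_cons] at hne
    obtain ⟨x, -, hx⟩ := Finset.exists_ne_zero_of_sum_ne_zero hne
    have hok : okm K F x := by
      by_contra hok
      simp [hok] at hx
    simp only [hok, if_true] at hx
    have h1 := left_ne_zero_of_mul hx
    have h2 := right_ne_zero_of_mul hx
    have hcl' : ∀ p, mv F x p = F0 p ∨ (Odd (mv F x p) ∧ |mv F x p - F0 p| ≤ 1) := by
      intro p
      by_cases hp : p = x.1
      · subst hp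
        right
        refine ⟨odd_mv hok.1, ?_⟩
        rcases hcl x.1 with h | h
        · rw [mv_self, h]
          rcases sg_cases x.2 with h' | h' <;> rw [h'] <;> simp
        · exact absurd hok.1 (Int.not_even_iff_odd.mpr h.1)
      · rw [mv_ne _ _ hp]
        exact hcl p
    have toclose : ∀ G : Conf n m, (∀ p, G p = F0 p ∨ (Odd (G p) ∧ |G p - F0 p| ≤ 1)) →
        close1 F0 G := by
      intro G hG p
      rcases hG p with h | h
      · rw [h]; simp
      · exact h.2
    intro g' hg'
    rcases List.mem_cons.mp hg' with h | h
    · refine ⟨F, mv F x, hF, hok.2, toclose _ hcl, toclose _ hcl', ?_⟩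
      rw [h]
      intro heq
      apply h1
      rw [heq]
      exact zmod2_add_self _
    · exact ih _ hok.2 hcl' h2 g' h

end

end RPTC


namespace RPTC

open Finset

noncomputable section

def ref {n m : ℕ} [NeZero n] (i : Fin n) : Conf n m → ZMod 2 := fun F => sgm i F + sgm 0 F

open Classical in
def zed {n m : ℕ} (i : Fin n) (F : Conf n m) : ℕ :=
  (univ.filter fun a => ∀ b ≤ a, F (i, b) = 0).card

lemma zed_of_lead {n m : ℕ} {F : Conf n m} {i : Fin n} {a : Fin (m + 1)}
    (h1 : F (i, a) ≠ 0) (h2 : ∀ b < a, F (i, b) = 0) : zed i F = a.val := by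
  classical
  unfold zed
  have : (univ.filter fun a => ∀ b ≤ a, F (i, b) = 0) = Finset.Iio a := by
    ext c
    simp only [mem_filter, mem_univ, true_and, Finset.mem_Iio]
    constructor
    · intro h
      by_contra hc
      exact h1 (h a (not_lt.mp hc))
    · intro h b hb
      exact h2 b (lt_of_le_of_lt hb h)
  rw [this, Fin.card_Iio]

lemma zed_le {n m K : ℕ} (hK : 1 ≤ K) {F : Conf n m} (hF : InP K F) (i : Fin n) :
    zed i F ≤ m := by
  obtain ⟨a, h1, h2⟩ := exists_lead hK hF i
  rw [zed_of_lead h1 h2]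
  omega

lemma flip_lemma {n m K : ℕ} (hK : 1 ≤ K) {F : Conf n m} (hF : InP K F) {x : Idx n m × Bool}
    (hx : okm K F x) {l : Fin n} (h : sgm l F ≠ sgm l (mv F x)) :
    x.1.1 = l ∧ (∀ b ≤ x.1.2, F (l, b) = 0) ∧ sgm l (mv F x) = (if x.2 then 0 else 1) := by
  classical
  have hl : x.1.1 = l := by
    by_contra hl
    apply h
    have e : ∀ b, mv F x (l, b) = F (l, b) := by
      intro b
      rw [mv_ne]
      intro h
      exact hl (by rw [← h])
    exact if_congr (by simp only [Ng, e]) rfl rfl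
  obtain ⟨⟨i, a⟩, b⟩ := x
  simp only at hl
  subst hl
  simp only [true_and]
  have e : ∀ c, c ≠ a → mv F ((i, a), b) (i, c) = F (i, c) := by
    intro c hc
    rw [mv_ne]
    simp [hc]
  have ea : mv F ((i, a), b) (i, a) = F (i, a) + sg b := mv_self F ((i, a), b)
  obtain ⟨a0, h1, h2⟩ := exists_lead hK hF i
  have hev : Even (F (i, a)) := hx.1
  rcases lt_trichotomy a a0 with h3 | h3 | h3
  · refine ⟨fun c hc => h2 c (lt_of_le_of_lt hc h3), ?_⟩
    rw [sgm_of_lead (a := a)]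
    · rw [ea, h2 a h3]
      cases b <;> simp [sg]
    · rw [ea, h2 a h3]
      cases b <;> simp [sg]
    · intro c hc
      rw [e c hc.ne]
      exact h2 c (hc.trans h3)
  · exfalso
    subst h3
    apply h
    rw [sgm_of_lead h1 h2, sgm_of_lead (a := a) (F := mv F ((i, a), b))]
    · rw [ea]
      obtain ⟨k, hk⟩ := hev
      refine if_congr ?_ rfl rfl
      rcases sg_cases b with h' | h' <;> rw [h'] <;> omega
    · rw [ea]
      obtain ⟨k, hk⟩ := hev
      rcases sg_cases b with h' | h' <;> rw [h'] <;> omega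
    · intro c hc
      rw [e c hc.ne]
      exact h2 c hc
  · exfalso
    apply h
    rw [sgm_of_lead h1 h2, sgm_of_lead (a := a0) (F := mv F ((i, a), b))]
    · rw [e _ h3.ne]
    · rw [e _ h3.ne]; exact h1
    · intro c hc
      rw [e c (hc.trans h3).ne]
      exact h2 c hc

lemma zed_flip {n m K : ℕ} (hK : 1 ≤ K) {F : Conf n m} (hF : InP K F) {x : Idx n m × Bool}
    (hx : okm K F x) {l : Fin n} (h : sgm l F ≠ sgm l (mv F x)) :
    x.1.2.val + 1 ≤ zed l F ∧
    (∑ i, zed i (mv F x)) + zed l F = (∑ i, zed i F) + x.1.2.val := by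
  classical
  obtain ⟨hl, hz, -⟩ := flip_lemma hK hF hx h
  obtain ⟨⟨i, a⟩, b⟩ := x
  simp only at hl hz ⊢
  subst hl
  have e : ∀ c, c ≠ a → mv F ((i, a), b) (i, c) = F (i, c) := by
    intro c hc
    rw [mv_ne]
    simp [hc]
  have ea : mv F ((i, a), b) (i, a) = F (i, a) + sg b := mv_self F ((i, a), b)
  have z1 : zed i (mv F ((i, a), b)) = a.val := by
    apply zed_of_lead
    · rw [ea, hz a le_rfl]
      cases b <;> simp [sg]
    · intro c hc
      rw [e c hc.ne]
      exact hz c hc.le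
  constructor
  · obtain ⟨a0, h1, h2⟩ := exists_lead hK hF i
    rw [zed_of_lead h1 h2]
    have : a < a0 := by
      by_contra hc
      exact h1 (hz a0 (not_lt.mp hc))
    exact this
  · rw [← Finset.add_sum_erase _ _ (mem_univ i), ← Finset.add_sum_erase univ (fun j => zed j F)
      (mem_univ i), z1]
    have : ∑ j ∈ univ.erase i, zed j (mv F ((i, a), b)) = ∑ j ∈ univ.erase i, zed j F := by
      refine Finset.sum_congr rfl fun j hj => ?_
      have hj' := (Finset.mem_erase.mp hj).1
      have e : ∀ c, mv F ((i, a), b) (j, c) = F (j, c) := by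
        intro c
        rw [mv_ne]
        simp [hj']
      simp only [zed, e]
    rw [this]
    ring

lemma ref_flip {n m : ℕ} [NeZero n] {F G : Conf n m} {i : Fin n}
    (h : ref i F + ref i G ≠ 0) : ∃ l, (l = i ∨ l = 0) ∧ sgm l F ≠ sgm l G := by
  by_contra hc
  push Not at hc
  apply h
  unfold ref
  rw [hc i (Or.inl rfl), hc 0 (Or.inr rfl)]
  exact zmod2_add_self _

lemma pot {n m K : ℕ} [NeZero n] (hK : 1 ≤ K) : ∀ (L : List (Fin n)) (F : Conf n m), InP K F →
    fold K (L.map ref) (uu K) F ≠ 0 → L.length ≤ ∑ i, zed i F := by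
  classical
  intro L
  induction L with
  | nil => intro F _ _; simp
  | cons i L ih =>
    intro F hF hne
    rw [List.map_cons, fold_cons] at hne
    obtain ⟨x, -, hx⟩ := Finset.exists_ne_zero_of_sum_ne_zero hne
    have hok : okm K F x := by
      by_contra hok
      simp [hok] at hx
    simp only [hok, if_true] at hx
    have h1 := left_ne_zero_of_mul hx
    have h2 := right_ne_zero_of_mul hx
    obtain ⟨l, -, hl⟩ := ref_flip h1
    obtain ⟨h3, h4⟩ := zed_flip hK hF hok hl
    have h5 := ih _ hok.2 h2
    rw [List.length_cons]
    omega

/-! ### The standard faces -/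

def OO {n m : ℕ} (K : ℕ) (r : Fin n → ℕ) : Conf n m := fun p =>
  if p.2.val = m then 2 * (K : ℤ)
  else if m ≤ p.2.val + r p.1 then (-1) ^ (m - p.2.val) else 0

lemma inP_OO {n m K : ℕ} (hK : 1 ≤ K) (r : Fin n → ℕ) : InP K (OO K r : Conf n m) := by
  intro i
  refine ⟨fun a => ?_, Fin.last m, ?_⟩
  · unfold OO
    split_ifs
    · rw [abs_of_nonneg] <;> omega
    · rw [abs_pow]; simp; omega
    · simp
  · simp [OO]

lemma lead_OO {n m K : ℕ} (hK : 1 ≤ K) (r : Fin n → ℕ) (i : Fin n) (hr : r i ≤ m) :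
    (OO K r : Conf n m) (i, ⟨m - r i, by omega⟩) ≠ 0 ∧
    ((OO K r : Conf n m) (i, ⟨m - r i, by omega⟩) < 0 ↔ Odd (r i)) ∧
    ∀ b < (⟨m - r i, by omega⟩ : Fin (m + 1)), (OO K r : Conf n m) (i, b) = 0 := by
  refine ⟨?_, ?_, ?_⟩
  · unfold OO
    simp only
    split_ifs with h1 h2
    · omega
    · simp
    · omega
  · unfold OO
    simp only
    split_ifs with h1 h2
    · have : r i = 0 ∨ m = 0 := by omega
      have h0 : r i = 0 := by omega
      simp [h0]
    · have : m - (m - r i) = r i := by omega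
      rw [this]
      rcases Nat.even_or_odd (r i) with h | h
      · rw [h.neg_one_pow]
        simp [h]
      · rw [h.neg_one_pow]
        simp [h]
    · omega
  · intro b hb
    rw [Fin.lt_def] at hb
    simp only at hb
    unfold OO
    simp only
    rw [if_neg (by omega), if_neg (by omega)]

lemma sgm_OO {n m K : ℕ} (hK : 1 ≤ K) (r : Fin n → ℕ) (i : Fin n) (hr : r i ≤ m) :
    sgm i (OO K r : Conf n m) = (r i : ZMod 2) := by
  obtain ⟨h1, h2, h3⟩ := lead_OO (n := n) hK r i hr
  rw [sgm_of_lead h1 h3]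
  rcases Nat.even_or_odd (r i) with h | h
  · rw [if_neg, (ZMod.natCast_eq_zero_iff_even).mpr h]
    rw [h2]
    exact Nat.not_odd_iff_even.mpr h
  · rw [if_pos (h2.mpr h), (ZMod.natCast_eq_one_iff_odd).mpr h]

lemma zed_OO {n m K : ℕ} (hK : 1 ≤ K) (r : Fin n → ℕ) (i : Fin n) (hr : r i ≤ m) :
    zed i (OO K r : Conf n m) = m - r i := by
  obtain ⟨h1, h2, h3⟩ := lead_OO (n := n) hK r i hr
  rw [zed_of_lead h1 h3]

def XX {n m : ℕ} (r : Fin n → ℕ) (l : Fin n) : Idx n m × Bool :=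
  ((l, ⟨m - 1 - r l, by omega⟩), decide (Odd (r l)))

lemma mv_XX {n m K : ℕ} (r : Fin n → ℕ) (l : Fin n) (hr : r l < m) :
    mv (OO K r : Conf n m) (XX r l) = OO K (Function.update r l (r l + 1)) := by
  funext ⟨i, a⟩
  by_cases hp : (i, a) = (XX r l : Idx n m × Bool).1
  · rw [hp, mv_self]
    have ha : a.val = m - 1 - r l := by
      have := congrArg (fun z => z.2.val) hp
      simpa [XX] using this
    have e1 : (OO K r : Conf n m) (XX r l : Idx n m × Bool).1 = 0 := by
      show (if m - 1 - r l = m then 2 * (K : ℤ)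
        else if m ≤ m - 1 - r l + r l then (-1) ^ (m - (m - 1 - r l)) else 0) = 0
      rw [if_neg (by omega), if_neg (by omega)]
    have e2 : (OO K (Function.update r l (r l + 1)) : Conf n m) (XX r l : Idx n m × Bool).1
        = (-1) ^ (r l + 1) := by
      show (if m - 1 - r l = m then 2 * (K : ℤ)
        else if m ≤ m - 1 - r l + Function.update r l (r l + 1) l
          then (-1) ^ (m - (m - 1 - r l)) else 0) = _
      rw [Function.update_self, if_neg (by omega), if_pos (by omega)]
      congr 1
      omega
    have e3 : (XX r l : Idx n m × Bool).2 = decide (Odd (r l)) := rfl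
    rw [e1, e2, e3]
    rcases Nat.even_or_odd (r l) with h | h
    · rw [h.add_one.neg_one_pow]
      have : ¬ Odd (r l) := Nat.not_odd_iff_even.mpr h
      simp [this, sg]
    · rw [h.add_one.neg_one_pow]
      simp [h, sg]
  · rw [mv_ne _ _ hp]
    by_cases hi : i = l
    · subst hi
      have ha : a.val ≠ m - 1 - r i := by
        intro ha
        apply hp
        simp only [XX, Prod.mk.injEq, true_and]
        exact Fin.ext ha
      unfold OO
      simp only [Function.update_self]
      refine if_congr Iff.rfl rfl (if_congr ?_ rfl rfl)
      omega
    · unfold OO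
      simp only [Function.update_of_ne hi]

lemma rk_OO {n m K : ℕ} (r : Fin n → ℕ) (hr : ∀ i, r i = m) :
    rk (OO K r : Conf n m) = n * m := by
  classical
  unfold rk
  have : ∀ i : Fin n, (univ.filter fun a => Odd ((OO K r : Conf n m) (i, a))).card = m := by
    intro i
    have e : (univ.filter fun a => Odd ((OO K r : Conf n m) (i, a)))
        = Finset.Iio (Fin.last m) := by
      ext a
      simp only [mem_filter, mem_univ, true_and, Finset.mem_Iio, OO, hr]
      rw [Fin.lt_def, Fin.val_last]
      split_ifs with h1 h2
      · simp [h1]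
      · simp only [(show Odd (-1 : ℤ) by decide).pow, true_iff]
        omega
      · omega
    rw [e, Fin.card_Iio, Fin.val_last]
  simp [this]

lemma step_OO {n m K : ℕ} [NeZero n] (hK : 1 ≤ K) (r : Fin n → ℕ) (hr : ∀ i, r i ≤ m)
    (i : Fin n) (hi : i ≠ 0) (L : List (Fin n)) (hlen : (∑ i, r i) + (L.length + 1) = n * m) :
    fold K ((i :: L).map ref) (uu K) (OO K r : Conf n m) =
      (if r i < m then fold K (L.map ref) (uu K)
        (OO K (Function.update r i (r i + 1)) : Conf n m) else 0) +
      (if r 0 < m then fold K (L.map ref) (uu K)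
        (OO K (Function.update r 0 (r 0 + 1)) : Conf n m) else 0) := by
  classical
  rw [List.map_cons, fold_cons]
  set V := fold K (L.map ref) (uu K : Conf n m → ZMod 2) with hV
  have hne : (XX r i : Idx n m × Bool) ≠ XX r 0 := by
    intro h
    exact hi (congrArg (fun z => z.1.1) h)
  have hP : InP K (OO K r : Conf n m) := inP_OO hK r
  -- the value at `XX`
  have val : ∀ l, l = i ∨ l = 0 → (if okm K (OO K r : Conf n m) (XX r l) then
      (ref i (OO K r : Conf n m) + ref i (mv (OO K r : Conf n m) (XX r l))) *
        V (mv (OO K r : Conf n m) (XX r l)) else 0)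
      = if r l < m then V (OO K (Function.update r l (r l + 1)) : Conf n m) else 0 := by
    intro l hl
    by_cases hrl : r l < m
    · rw [if_pos hrl]
      have hok : okm K (OO K r : Conf n m) (XX r l) := by
        refine ⟨?_, ?_⟩
        · show Even (if m - 1 - r l = m then 2 * (K : ℤ)
            else if m ≤ m - 1 - r l + r l then (-1) ^ (m - (m - 1 - r l)) else 0)
          rw [if_neg (by omega), if_neg (by omega)]
          simp
        · rw [mv_XX r l hrl]
          exact inP_OO hK _
      rw [if_pos hok, mv_XX r l hrl]
      have hr' : ∀ j, (Function.update r l (r l + 1)) j ≤ m := by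
        intro j
        by_cases hj : j = l
        · subst hj; simp; omega
        · simp [hj, hr j]
      unfold ref
      rw [sgm_OO hK r i (hr i), sgm_OO hK r 0 (hr 0), sgm_OO hK _ i (hr' i), sgm_OO hK _ 0 (hr' 0)]
      have h2 : (r i : ZMod 2) + r i = 0 := zmod2_add_self _
      have h3 : (r 0 : ZMod 2) + r 0 = 0 := zmod2_add_self _
      rcases hl with rfl | rfl
      · simp only [Function.update_self, Function.update_of_ne (Ne.symm hi)]
        push_cast
        linear_combination (h2 + h3) * V (OO K (Function.update r l (r l + 1)))
      · simp only [Function.update_self, Function.update_of_ne hi]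
        push_cast
        linear_combination (h2 + h3) * V (OO K (Function.update r 0 (r 0 + 1)))
    · rw [if_neg hrl]
      -- the coordinate is then odd or the move is not a flip
      by_contra hne0
      have hok : okm K (OO K r : Conf n m) (XX r l) := by
        by_contra hok
        simp [hok] at hne0
      rw [if_pos hok] at hne0
      obtain ⟨l', -, hfl⟩ := ref_flip (left_ne_zero_of_mul hne0)
      obtain ⟨hl1, hl2, -⟩ := flip_lemma hK hP hok hfl
      have : l = l' := hl1
      subst this
      have h4 := (zed_flip hK hP hok hfl).1
      rw [zed_OO hK r l (hr l)] at h4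
      omega
  rw [← val i (Or.inl rfl), ← val 0 (Or.inr rfl)]
  unfold opW
  rw [← Finset.sum_pair (f := fun x => if okm K (OO K r : Conf n m) x then
    (ref i (OO K r : Conf n m) + ref i (mv (OO K r : Conf n m) x)) *
      V (mv (OO K r : Conf n m) x) else 0) hne]
  symm
  refine Finset.sum_subset (Finset.subset_univ _) ?_
  intro x _ hx
  by_contra hne0
  apply hx
  have hok : okm K (OO K r : Conf n m) x := by
    by_contra hok
    simp [hok] at hne0
  rw [if_pos hok] at hne0
  obtain ⟨l, hl, hfl⟩ := ref_flip (left_ne_zero_of_mul hne0)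
  have hV0 := right_ne_zero_of_mul hne0
  have hp := pot hK L _ hok.2 hV0
  obtain ⟨z1, z2⟩ := zed_flip hK hP hok hfl
  obtain ⟨f1, f2, f3⟩ := flip_lemma hK hP hok hfl
  have hzs : (∑ j, zed j (OO K r : Conf n m)) + ∑ j, r j = n * m := by
    rw [← Finset.sum_add_distrib]
    have : ∀ j ∈ (univ : Finset (Fin n)), zed j (OO K r : Conf n m) + r j = m := by
      intro j _
      rw [zed_OO hK r j (hr j)]
      have := hr j
      omega
    rw [Finset.sum_congr rfl this]
    simp
  rw [zed_OO hK r l (hr l)] at z1 z2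
  have ha : x.1.2.val = m - 1 - r l := by omega
  have hrl : r l < m := by omega
  have hxX : x = XX r l := by
    obtain ⟨⟨i', a⟩, b⟩ := x
    simp only at f1 ha f3
    subst f1
    have hb : b = decide (Odd (r i')) := by
      rw [sgm_OO hK r i' (hr i')] at hfl
      rw [f3] at hfl
      rcases Nat.even_or_odd (r i') with h | h
      · rw [(ZMod.natCast_eq_zero_iff_even).mpr h] at hfl
        have : ¬ Odd (r i') := Nat.not_odd_iff_even.mpr h
        cases b <;> simp_all
      · rw [(ZMod.natCast_eq_one_iff_odd).mpr h] at hfl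
        cases b <;> simp_all
    simp only [XX, hb, Prod.mk.injEq, true_and, and_true]
    exact Fin.ext ha
  rw [hxX]
  rcases hl with rfl | rfl <;> simp

lemma count_sum {n : ℕ} [NeZero n] (L : List (Fin n)) (h0 : ∀ i ∈ L, i ≠ 0) :
    ∑ i ∈ univ.erase (0 : Fin n), L.count i = L.length := by
  classical
  have h1 : ∑ i : Fin n, L.count i = L.length := by
    have := Multiset.sum_count_eq_card (s := (univ : Finset (Fin n))) (m := (L : Multiset (Fin n)))
      (by simp)
    simpa using this
  rw [← h1, ← Finset.add_sum_erase univ _ (mem_univ (0 : Fin n)),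
    List.count_eq_zero_of_not_mem (fun h => h0 0 h rfl), zero_add]

lemma fold_OO {n m K : ℕ} [NeZero n] (hK : 1 ≤ K) : ∀ (L : List (Fin n)) (r : Fin n → ℕ),
    (∀ i ∈ L, i ≠ 0) → (∀ i, r i ≤ m) → (∑ i, r i) + L.length = n * m →
    fold K (L.map ref) (uu K) (OO K r : Conf n m) =
      ((∏ i ∈ univ.erase (0 : Fin n), (L.count i).choose (m - r i) : ℕ) : ZMod 2) := by
  classical
  intro L
  induction L with
  | nil =>
    intro r _ hr hs
    have hs' : ∑ i, r i = ∑ i : Fin n, m := by simpa using hs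
    have hall : ∀ i, r i = m := fun i =>
      (Finset.sum_eq_sum_iff_of_le (fun i _ => hr i)).mp hs' i (mem_univ _)
    have : fold K (([] : List (Fin n)).map ref) (uu K) (OO K r : Conf n m) = uu K (OO K r) := rfl
    rw [this]
    unfold uu
    rw [if_pos ⟨inP_OO hK r, rk_OO r hall⟩]
    simp [hall]
  | cons i L ih =>
    intro r h0 hr hs
    have hi : i ≠ 0 := h0 i (by simp)
    have h0' : ∀ j ∈ L, j ≠ 0 := fun j hj => h0 j (by simp [hj])
    rw [List.length_cons] at hs
    rw [step_OO hK r hr i hi L hs]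
    have hmem : i ∈ univ.erase (0 : Fin n) := by simp [hi]
    have hupd : ∀ l, r l < m → (∀ j, Function.update r l (r l + 1) j ≤ m) ∧
        (∑ j, Function.update r l (r l + 1) j) + L.length = n * m := by
      intro l hl
      refine ⟨fun j => ?_, ?_⟩
      · by_cases hj : j = l
        · subst hj; simp; omega
        · simp [hj, hr j]
      · rw [Finset.sum_update_of_mem (mem_univ l), Finset.sdiff_singleton_eq_erase]
        rw [← Finset.add_sum_erase univ r (mem_univ l)] at hs
        omega
    -- second term
    have t2 : (if r 0 < m then fold K (L.map ref) (uu K)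
        (OO K (Function.update r 0 (r 0 + 1)) : Conf n m) else 0) =
        ((∏ j ∈ univ.erase (0 : Fin n), (L.count j).choose (m - r j) : ℕ) : ZMod 2) := by
      split_ifs with h
      · rw [ih _ h0' (hupd 0 h).1 (hupd 0 h).2]
        congr 1
        refine Finset.prod_congr rfl fun j hj => ?_
        rw [Function.update_of_ne (Finset.mem_erase.mp hj).1]
      · have hr0 : r 0 = m := le_antisymm (hr 0) (not_lt.mp h)
        have hex : ∃ j ∈ univ.erase (0 : Fin n), L.count j < m - r j := by
          by_contra hc
          push Not at hc
          have h1 := Finset.sum_le_sum hc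
          rw [count_sum L h0'] at h1
          have h2 : ∑ j ∈ univ.erase (0 : Fin n), (m - r j) + ∑ j, r j = n * m := by
            rw [← Finset.add_sum_erase univ r (mem_univ 0), hr0, add_left_comm,
              ← Finset.sum_add_distrib, Finset.sum_congr rfl
              (fun j _ => Nat.sub_add_cancel (hr j)), Finset.sum_const,
              Finset.card_erase_of_mem (mem_univ _), Finset.card_univ, Fintype.card_fin]
            have : 1 ≤ n := Nat.one_le_iff_ne_zero.mpr (NeZero.ne n)
            obtain ⟨k, rfl⟩ := Nat.exists_eq_add_of_le this
            simp
            ring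
          omega
        obtain ⟨j, hj, hlt⟩ := hex
        rw [Finset.prod_eq_zero hj (Nat.choose_eq_zero_of_lt hlt)]
        simp
    have split : ∀ f : Fin n → ℕ, ∏ j ∈ univ.erase (0 : Fin n), f j
        = f i * ∏ j ∈ (univ.erase (0 : Fin n)).erase i, f j := fun f =>
      (Finset.mul_prod_erase _ f hmem).symm
    have rest : ∏ j ∈ (univ.erase (0 : Fin n)).erase i, ((i :: L).count j).choose (m - r j)
        = ∏ j ∈ (univ.erase (0 : Fin n)).erase i, (L.count j).choose (m - r j) := by
      refine Finset.prod_congr rfl fun j hj => ?_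
      rw [List.count_cons_of_ne (Finset.mem_erase.mp hj).1.symm]
    rw [t2]
    split_ifs with h
    · rw [ih _ h0' (hupd i h).1 (hupd i h).2, ← Nat.cast_add]
      congr 1
      rw [split, split, split, rest]
      have rest2 : ∏ j ∈ (univ.erase (0 : Fin n)).erase i,
          (L.count j).choose (m - Function.update r i (r i + 1) j)
          = ∏ j ∈ (univ.erase (0 : Fin n)).erase i, (L.count j).choose (m - r j) := by
        refine Finset.prod_congr rfl fun j hj => ?_
        rw [Function.update_of_ne (Finset.mem_erase.mp hj).1]
      rw [rest2, ← add_mul, List.count_cons_self, Function.update_self]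
      congr 1
      obtain ⟨s, hs'⟩ : ∃ s, m - r i = s + 1 := ⟨m - r i - 1, by omega⟩
      rw [hs', show m - (r i + 1) = s by omega, Nat.choose_succ_succ]
    · have hri : r i = m := le_antisymm (hr i) (not_lt.mp h)
      rw [zero_add]
      congr 1
      rw [split, split, rest, hri]
      simp

lemma SS_ref {n m K : ℕ} [NeZero n] (hK : 1 ≤ K) (L : List (Fin n)) (h0 : ∀ i ∈ L, i ≠ 0)
    (hlen : L.length = n * m) (hodd : ∀ i, i ≠ 0 → Odd ((L.count i).choose m)) :
    SS K (L.map ref : List (Conf n m → ZMod 2)) = 1 := by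
  classical
  have hO := inP_OO (n := n) (m := m) hK (fun _ => 0)
  have hmem : (OO K (fun _ => 0) : Conf n m) ∈ D0 n m K := by
    refine mem_D0.mpr ⟨hO, ?_, fun i => ?_⟩
    · intro p
      unfold OO
      split_ifs with h1 h2
      · simp
      · exfalso
        have := p.2.isLt
        have h2' : m ≤ p.2.val := by simpa using h2
        omega
      · simp
    · rw [sgm_OO hK _ i (Nat.zero_le _)]
      simp
  unfold SS
  rw [Finset.sum_eq_single_of_mem _ hmem]
  · rw [fold_OO hK L _ h0 (by simp) (by simpa using hlen)]
    rw [Nat.cast_prod]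
    refine Finset.prod_eq_one fun i hi => ?_
    rw [ZMod.natCast_eq_one_iff_odd]
    exact hodd i (Finset.mem_erase.mp hi).1
  · intro F hF hne
    by_contra hne0
    obtain ⟨hP, hE, hS⟩ := mem_D0.mp hF
    have hp := pot hK L F hP hne0
    have hle : ∀ i ∈ (univ : Finset (Fin n)), zed i F ≤ m := fun i _ => zed_le hK hP i
    have hsum : ∑ i, zed i F = ∑ i : Fin n, m := by
      refine le_antisymm (Finset.sum_le_sum hle) ?_
      simpa [← hlen] using hp
    have hall := (Finset.sum_eq_sum_iff_of_le hle).mp hsum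
    apply hne
    funext ⟨i, a⟩
    obtain ⟨a0, h1, h2⟩ := exists_lead hK hP i
    have hz := hall i (mem_univ _)
    rw [zed_of_lead h1 h2] at hz
    have ha0 : a0 = Fin.last m := Fin.ext hz
    subst ha0
    by_cases ha : a = Fin.last m
    · subst ha
      obtain ⟨-, c, hc⟩ := hP i
      have hcl : c = Fin.last m := by
        by_contra hcl
        rw [h2 c (Fin.lt_last_iff_ne_last.mpr hcl)] at hc
        simp at hc
        omega
      rw [hcl] at hc
      have hs := hS i
      rw [sgm_of_lead h1 h2] at hs
      have hnn : ¬ F (i, Fin.last m) < 0 := by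
        intro hlt
        simp [hlt] at hs
      rw [abs_of_nonneg (not_lt.mp hnn)] at hc
      simp [OO, hc]
    · have hlt : a < Fin.last m := Fin.lt_last_iff_ne_last.mpr ha
      rw [h2 a hlt]
      have : a.val < m := hlt
      unfold OO
      rw [if_neg (by simp; omega), if_neg (by simp; omega)]

def Tw' {n m : ℕ} [NeZero n] (K : ℕ) (i : Fin n) (g : Conf n m → ZMod 2) : Prop :=
  ∀ F, InP K F → ∀ l, g (fl l F) = g F + if l = i ∨ l = 0 then 1 else 0

lemma tw'_ref {n m K : ℕ} [NeZero n] (hK : 1 ≤ K) {i : Fin n} (hi : i ≠ 0) :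
    Tw' K i (ref i : Conf n m → ZMod 2) := by
  intro F hF l
  unfold ref
  rw [sgm_fl hK hF, sgm_fl hK hF]
  by_cases h1 : l = i
  · have h2 : l ≠ 0 := by rw [h1]; exact hi
    simp [h1, hi]; ring
  · by_cases h2 : l = 0
    · simp [h2, Ne.symm hi]; ring
    · simp [h1, h2]

lemma Tw'.tw {n m K : ℕ} [NeZero n] {i : Fin n} {g : Conf n m → ZMod 2} (h : Tw' K i g) :
    Tw K g := ⟨_, h⟩

/-- The combinatorial core: a Tucker/Fan type lemma for products of spheres. -/
theorem comb_core {n m K : ℕ} [NeZero n] (hK : 1 ≤ K) (L : List (Fin n)) (h0 : ∀ i ∈ L, i ≠ 0)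
    (hlen : L.length = n * m) (hodd : ∀ i, i ≠ 0 → Odd ((L.count i).choose m))
    (gs : List (Conf n m → ZMod 2)) (hgs : List.Forall₂ (Tw' K) L gs) :
    ∃ F0 : Conf n m, InP K F0 ∧ ∀ g ∈ gs, ∃ G G', InP K G ∧ InP K G' ∧ close1 F0 G ∧
      close1 F0 G' ∧ g G ≠ g G' := by
  have h1 := SS_ref (m := m) hK L h0 hlen hodd
  have h2 : SS K (L.map ref : List (Conf n m → ZMod 2)) = SS K gs := by
    have := SS_congr (gs := (L.map ref : List (Conf n m → ZMod 2))) (gs' := gs) hK ?_ [] (by simp)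
    · simpa using this
    · clear h1 hlen hodd
      induction hgs with
      | nil => exact List.Forall₂.nil
      | @cons i g L gs hg _ ih =>
        rw [List.map_cons]
        refine List.Forall₂.cons ?_ (ih fun j hj => h0 j (by simp [hj]))
        have hi := h0 i (by simp)
        have hr := tw'_ref (m := m) hK hi
        refine ⟨hr.tw, hg.tw, ?_⟩
        intro F hF l
        simp only [Pi.add_apply]
        rw [hr F hF l, hg F hF l]
        have := zmod2_add_self (if l = i ∨ l = 0 then (1 : ZMod 2) else 0)
        linear_combination this
  rw [h1] at h2
  have h3 : SS K gs ≠ 0 := by rw [← h2]; exact one_ne_zero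
  obtain ⟨F0, hF0, hne⟩ := Finset.exists_ne_zero_of_sum_ne_zero h3
  obtain ⟨hP, -, -⟩ := mem_D0.mp hF0
  exact ⟨F0, hP, fold_chain F0 gs F0 hP (fun p => Or.inl rfl) hne⟩

end

end RPTC


open unitInterval

namespace RPTC

noncomputable section

open Topology

def pr (m : ℕ) : Sph m → RP m := Quotient.mk (antipodalSetoid m)

lemma pr_eq_iff {m : ℕ} {x y : Sph m} : pr m x = pr m y ↔ x = y ∨ x = -y := by
  refine Iff.trans (Quotient.eq (r := antipodalSetoid m)) ?_
  constructor
  · rintro (h | h)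
    · exact Or.inl (Subtype.ext h)
    · exact Or.inr (Subtype.ext h)
  · rintro (h | h)
    · exact Or.inl (congrArg Subtype.val h)
    · exact Or.inr (congrArg Subtype.val h)

lemma pr_neg {m : ℕ} (x : Sph m) : pr m (-x) = pr m x := pr_eq_iff.mpr (Or.inr rfl)

lemma pr_quot (m : ℕ) : IsQuotientMap (pr m) := isQuotientMap_quotient_mk'

lemma pr_cont (m : ℕ) : Continuous (pr m) := (pr_quot m).continuous

lemma pr_surj (m : ℕ) : Function.Surjective (pr m) := (pr_quot m).surjective

lemma sph_neg_ne {m : ℕ} (x : Sph m) : -x ≠ x := ne_neg_of_mem_unit_sphere ℝ x |>.symm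

/-- The action of the two element group on the sphere. -/
@[reducible] def actS (m : ℕ) : MulAction ℤˣ (Sph m) where
  smul u x := if u = 1 then x else -x
  one_smul x := if_pos rfl
  mul_smul u v x := by
    change (if u * v = 1 then x else -x) =
      if u = 1 then (if v = 1 then x else -x) else -(if v = 1 then x else -x)
    rcases Int.units_eq_one_or u with rfl | rfl <;> rcases Int.units_eq_one_or v with rfl | rfl <;>
      simp

lemma pr_qcov (m : ℕ) : letI := actS m; IsQuotientCoveringMap (pr m) ℤˣ := by
  letI := actS m
  have hs : ∀ (u : ℤˣ) (x : Sph m), u • x = if u = 1 then x else -x := fun _ _ => rfl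
  refine ⟨pr_quot m, ⟨?_⟩, ?_, ?_⟩
  · intro u
    rcases Int.units_eq_one_or u with rfl | rfl
    · simp only [hs, if_true]
      exact continuous_id
    · simp only [hs]
      simpa using (continuous_neg : Continuous fun x : Sph m => -x)
  · intro x y
    rw [pr_eq_iff]
    constructor
    · rintro (h | h)
      · exact ⟨1, by simp [h]⟩
      · exact ⟨-1, by simp [hs, h]⟩
    · rintro ⟨u, hu⟩
      simp only [hs] at hu
      split_ifs at hu
      · exact Or.inl hu.symm
      · exact Or.inr hu.symm
  · intro x
    obtain ⟨A, B, hA, hB, hxA, hxB, hAB⟩ := t2_separation (sph_neg_ne x)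
    have hc : Continuous fun x : Sph m => -x := continuous_neg
    refine ⟨B ∩ (fun x => -x) ⁻¹' A, (hB.inter (hA.preimage hc)).mem_nhds ⟨hxB, hxA⟩, ?_⟩
    rintro u ⟨_, ⟨⟨z, hz, rfl⟩, hz2⟩⟩
    rcases Int.units_eq_one_or u with rfl | rfl
    · rfl
    · exfalso
      have : ((-1 : ℤˣ) • z) = -z := by simp [hs]
      simp only [this] at hz2
      exact Set.disjoint_left.mp hAB hz.2 hz2.1

lemma pr_cov (m : ℕ) : IsCoveringMap (pr m) := by
  let := actS m
  exact (pr_qcov m).isCoveringMap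

lemma pr_oq (m : ℕ) : IsOpenQuotientMap (pr m) := by
  let := actS m
  exact (pr_qcov m).isOpenQuotientMap

abbrev YY (n m : ℕ) : Type := Fin n → Sph m

def prn {n m : ℕ} (y : YY n m) : Fin n → RP m := fun i => pr m (y i)

lemma prn_cont {n m : ℕ} : Continuous (prn : YY n m → Fin n → RP m) :=
  continuous_pi fun i => (pr_cont m).comp (continuous_apply i)

def flS {n m : ℕ} (l : Fin n) (y : YY n m) : YY n m := Function.update y l (-(y l))

lemma flS_flS {n m : ℕ} (l : Fin n) (y : YY n m) : flS l (flS l y) = y := by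
  simp [flS]

lemma prn_flS {n m : ℕ} (l : Fin n) (y : YY n m) : prn (flS l y) = prn y := by
  funext i
  unfold prn flS
  by_cases h : i = l
  · subst h; simp [pr_neg]
  · simp [h]

lemma z2_cases (c : ZMod 2) : c = 0 ∨ c = 1 := by
  revert c
  decide

def sgn {m : ℕ} (c : ZMod 2) (x : Sph m) : Sph m := if c = 0 then x else -x

lemma sgn_add_one {m : ℕ} (c : ZMod 2) (x : Sph m) : sgn (c + 1) x = - sgn c x := by
  unfold sgn
  rcases z2_cases c with rfl | rfl
  · simp
  · have : (1 : ZMod 2) + 1 = 0 := by decide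
    simp [this]

lemma sgn_neg {m : ℕ} (c : ZMod 2) (x : Sph m) : sgn c (-x) = - sgn c x := by
  unfold sgn
  split_ifs <;> rfl

lemma sgn_inj {m : ℕ} {c c' : ZMod 2} {x : Sph m} (h : sgn c x = sgn c' x) : c = c' := by
  have h1 := sph_neg_ne x
  rcases z2_cases c with rfl | rfl <;> rcases z2_cases c' with rfl | rfl
  · rfl
  · exact absurd (by simpa [sgn] using h.symm) h1
  · exact absurd (by simpa [sgn] using h) h1
  · rfl

lemma evalPt_zero {n : ℕ} [NeZero n] : evalPt n 0 = 0 := by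
  apply Subtype.ext
  simp [evalPt]

lemma sign_sets {n m : ℕ} [NeZero n] (U : Set (Fin n → RP m)) (hU : IsOpen U)
    (s : C(U, C(unitInterval, RP m)))
    (hs : ∀ x : U, ∀ j : Fin n, s x (evalPt n j) = (x : Fin n → RP m) j)
    (i : Fin n) (hi : i ≠ 0) :
    ∃ P : ZMod 2 → Set (YY n m), (∀ c, IsOpen (P c)) ∧
      (∀ y c c', y ∈ P c → y ∈ P c' → c = c') ∧
      (∀ y c l, y ∈ P c → flS l y ∈ P (c + if l = i ∨ l = 0 then 1 else 0)) ∧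
      (∀ y, prn y ∈ U → ∃ c, y ∈ P c) := by
  let P : ZMod 2 → Set (YY n m) := fun c => {y | ∃ hy : prn y ∈ U, ∃ Γ : C(unitInterval, Sph m),
    pr m ∘ Γ = s ⟨prn y, hy⟩ ∧ Γ 0 = y 0 ∧ Γ (evalPt n i) = sgn c (y i)}
  have cov := pr_cov m
  let W : Set (YY n m) := {y | prn y ∈ U}
  have hW : IsOpen W := hU.preimage prn_cont
  let toU : C(W, U) := ⟨fun w => ⟨prn w.1, w.2⟩, by
    exact Continuous.subtype_mk (prn_cont.comp continuous_subtype_val) _⟩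
  let H : C(unitInterval × W, RP m) := ⟨fun p => s (toU p.2) p.1, by fun_prop⟩
  let f : C(W, Sph m) := ⟨fun w => w.1 0, (continuous_apply 0).comp continuous_subtype_val⟩
  have H0 : ∀ a, H (0, a) = pr m (f a) := by
    intro a
    have := hs (toU a) 0
    rw [evalPt_zero] at this
    exact this
  let Λ := cov.liftHomotopy H f H0
  let e : W → Sph m := fun w => Λ (evalPt n i, w)
  have he : Continuous e := Λ.continuous.comp (by fun_prop)
  have hpre : ∀ w : W, pr m (e w) = pr m (w.1 i) := by
    intro w
    have h1 := congrFun (cov.liftHomotopy_lifts H f H0) (evalPt n i, w)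
    have h2 := hs (toU w) i
    exact h1.trans h2
  let Γw : W → C(unitInterval, Sph m) := fun w => Λ.comp ⟨fun t => (t, w), by fun_prop⟩
  have hΓ1 : ∀ w : W, pr m ∘ (Γw w) = s ⟨prn w.1, w.2⟩ := by
    intro w
    funext t
    exact congrFun (cov.liftHomotopy_lifts H f H0) (t, w)
  have hΓ2 : ∀ w : W, Γw w 0 = w.1 0 := fun w => cov.liftHomotopy_zero H f H0 w
  have hPe : ∀ c, P c = Subtype.val '' {w : W | e w = sgn c (w.1 i)} := by
    intro c
    ext y
    constructor
    · rintro ⟨hy, Γ, h1, h2, h3⟩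
      refine ⟨⟨y, hy⟩, ?_, rfl⟩
      have : (Γ : unitInterval → Sph m) = Γw ⟨y, hy⟩ := by
        refine cov.eq_of_comp_eq Γ.continuous (Γw ⟨y, hy⟩).continuous ?_ 0 ?_
        · rw [h1, hΓ1]
        · rw [h2, hΓ2]
      have h4 := congrFun this (evalPt n i)
      rw [h3] at h4
      exact h4.symm
    · rintro ⟨w, hw, rfl⟩
      exact ⟨w.2, Γw w, hΓ1 w, hΓ2 w, hw⟩
  have hdec : ∀ w : W, e w = sgn 0 (w.1 i) ∨ e w = sgn 1 (w.1 i) := by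
    intro w
    have := pr_eq_iff.mp (hpre w)
    simpa [sgn] using this
  have hex : ∀ w : W, ∃ c, e w = sgn c (w.1 i) := by
    intro w
    rcases hdec w with h | h
    · exact ⟨_, h⟩
    · exact ⟨_, h⟩
  refine ⟨P, ?_, ?_, ?_, ?_⟩
  · intro c
    rw [hPe]
    apply hW.isOpenMap_subtype_val
    have hcompl : {w : W | e w = sgn c (w.1 i)} = {w : W | e w = sgn (c + 1) (w.1 i)}ᶜ := by
      ext w
      simp only [Set.mem_ofPred_eq, Set.mem_compl_iff]
      rw [sgn_add_one]
      have h1 := sph_neg_ne (sgn c (w.1 i))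
      constructor
      · intro h h2
        exact h1 (h2.symm.trans h)
      · intro h
        obtain ⟨c', hc'⟩ := hex w
        by_cases hcc : c' = c
        · rw [← hcc]; exact hc'
        · exfalso
          apply h
          have : c' = c + 1 := by
            clear * - hcc
            revert hcc
            revert c c'
            decide
          rw [hc', this, sgn_add_one]
    rw [hcompl, isOpen_compl_iff]
    have hsg : Continuous fun w : W => sgn (c + 1) (w.1 i) := by
      unfold sgn
      split_ifs
      · exact (continuous_apply i).comp continuous_subtype_val
      · exact continuous_neg.comp ((continuous_apply i).comp continuous_subtype_val)
    exact isClosed_eq he hsg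
  · intro y c c' hc hc'
    rw [hPe] at hc hc'
    obtain ⟨w, hw, rfl⟩ := hc
    obtain ⟨w', hw', h⟩ := hc'
    have : w' = w := Subtype.ext h
    subst this
    exact sgn_inj (hw.symm.trans hw')
  · rintro y c l ⟨hy, Γ, h1, h2, h3⟩
    have hy' : prn (flS l y) ∈ U := by rw [prn_flS]; exact hy
    have hss : s ⟨prn (flS l y), hy'⟩ = s ⟨prn y, hy⟩ := by
      congr 1
      exact Subtype.ext (prn_flS l y)
    by_cases hl0 : l = 0
    · subst hl0
      refine ⟨hy', ⟨fun t => - Γ t, by fun_prop⟩, ?_, ?_, ?_⟩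
      · rw [hss, ← h1]
        funext t
        exact pr_neg _
      · change -Γ 0 = flS 0 y 0
        rw [h2]
        simp [flS]
      · change - Γ (evalPt n i) = _
        rw [h3, if_pos (Or.inr rfl), sgn_add_one]
        simp [flS, hi]
    · by_cases hli : l = i
      · subst hli
        refine ⟨hy', Γ, by rw [hss, h1], ?_, ?_⟩
        · rw [h2]
          simp [flS, Ne.symm hi]
        · rw [h3, if_pos (Or.inl rfl), sgn_add_one]
          simp [flS, sgn_neg]
      · refine ⟨hy', Γ, by rw [hss, h1], ?_, ?_⟩
        · rw [h2]
          simp [flS, Ne.symm hl0]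
        · rw [h3, if_neg (by tauto)]
          simp [flS, Ne.symm hli]
  · intro y hy
    obtain ⟨c, hc⟩ := hex ⟨y, hy⟩
    exact ⟨c, by rw [hPe]; exact ⟨⟨y, hy⟩, hc, rfl⟩⟩

end

end RPTC


open unitInterval

namespace RPTC

noncomputable section

open Topology

abbrev EE (m : ℕ) : Type := EuclideanSpace ℝ (Fin (m + 1))

/-- A base point of the sphere. -/
def bp (m : ℕ) : Sph m := ⟨EuclideanSpace.single 0 1, by simp⟩

open Classical in
/-- Normalization of vectors. -/
def nrm {m : ℕ} (v : EE m) : Sph m :=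
  if h : v = 0 then bp m else ⟨‖v‖⁻¹ • v, by
    rw [mem_sphere_zero_iff_norm, norm_smul, norm_inv, norm_norm,
      inv_mul_cancel₀ (norm_ne_zero_iff.mpr h)]⟩

lemma nrm_val {m : ℕ} {v : EE m} (h : v ≠ 0) : ((nrm v : Sph m) : EE m) = ‖v‖⁻¹ • v := by
  unfold nrm
  rw [dif_neg h]

lemma nrm_cont {m : ℕ} : ContinuousOn (nrm : EE m → Sph m) {v | v ≠ 0} := by
  rw [Topology.IsInducing.subtypeVal.continuousOn_iff]
  have h : ContinuousOn (fun v : EE m => ‖v‖⁻¹ • v) {v | v ≠ 0} :=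
    ContinuousOn.smul (ContinuousOn.inv₀ continuous_norm.continuousOn
      fun v hv => norm_ne_zero_iff.mpr hv) continuousOn_id
  exact h.congr fun v hv => nrm_val hv

lemma nrm_neg {m : ℕ} {v : EE m} (h : v ≠ 0) : nrm (-v) = - nrm v := by
  apply Subtype.ext
  rw [nrm_val (neg_ne_zero.mpr h)]
  change _ = -((nrm v : Sph m) : EE m)
  rw [nrm_val h]
  simp

lemma nrm_sph {m : ℕ} (x : Sph m) : nrm (x : EE m) = x := by
  have hx : ‖(x : EE m)‖ = 1 := mem_sphere_zero_iff_norm.mp x.2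
  apply Subtype.ext
  rw [nrm_val, hx]
  · simp
  · intro h
    rw [h] at hx
    simp at hx

def blk {n m : ℕ} (i : Fin n) (z : Idx n m → ℝ) : EE m := WithLp.toLp 2 fun a => z (i, a)

lemma blk_cont {n m : ℕ} (i : Fin n) : Continuous (blk i : (Idx n m → ℝ) → EE m) := by
  unfold blk
  exact (PiLp.continuous_toLp 2 _).comp (by fun_prop)

lemma blk_ne {n m : ℕ} {i : Fin n} {z : Idx n m → ℝ} {a : Fin (m + 1)} (h : z (i, a) ≠ 0) :
    blk i z ≠ 0 := by
  intro h0
  apply h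
  have := congrArg (fun v : EE m => v a) h0
  simpa [blk] using this

def NN {n m : ℕ} (z : Idx n m → ℝ) : YY n m := fun i => nrm (blk i z)

def ZZ (n m : ℕ) : Set (Idx n m → ℝ) := {z | ∀ i, blk i z ≠ 0}

lemma ZZ_open (n m : ℕ) : IsOpen (ZZ n m) := by
  have : ZZ n m = ⋂ i, (blk i) ⁻¹' {v : EE m | v ≠ 0} := by
    ext z; simp [ZZ]
  rw [this]
  exact isOpen_iInter_of_finite fun i => isOpen_ne.preimage (blk_cont i)

lemma NN_cont {n m : ℕ} : ContinuousOn (NN : (Idx n m → ℝ) → YY n m) (ZZ n m) := by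
  rw [continuousOn_pi]
  intro i
  exact nrm_cont.comp (blk_cont i).continuousOn fun z hz => hz i

def MM (n m : ℕ) : Set (Idx n m → ℝ) :=
  {z | ∀ i, (∀ a, |z (i, a)| ≤ 1) ∧ ∃ a, |z (i, a)| = 1}

lemma MM_compact (n m : ℕ) : IsCompact (MM n m) := by
  apply Metric.isCompact_of_isClosed_isBounded
  · have : MM n m = ⋂ i, ((⋂ a, {z | |z (i, a)| ≤ 1}) ∩ ⋃ a, {z | |z (i, a)| = 1}) := by
      ext z; simp [MM]
    rw [this]
    refine isClosed_iInter fun i => IsClosed.inter (isClosed_iInter fun a => ?_)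
      (isClosed_iUnion_of_finite fun a => ?_)
    · exact isClosed_le (by fun_prop) continuous_const
    · exact isClosed_eq (by fun_prop) continuous_const
  · refine (Metric.isBounded_closedBall (x := (0 : Idx n m → ℝ)) (r := 1)).subset ?_
    intro z hz
    rw [mem_closedBall_zero_iff, pi_norm_le_iff_of_nonneg zero_le_one]
    intro p
    exact (hz p.1).1 p.2

lemma MM_sub (n m : ℕ) : MM n m ⊆ ZZ n m := by
  intro z hz i
  obtain ⟨a, ha⟩ := (hz i).2
  apply blk_ne (a := a)
  intro h
  simp [h] at ha

def ph {n m : ℕ} (K : ℕ) (F : Conf n m) : Idx n m → ℝ := fun p => (F p : ℝ) / (2 * K)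

lemma ph_mem {n m K : ℕ} (hK : 1 ≤ K) {F : Conf n m} (hF : InP K F) : ph K F ∈ MM n m := by
  have hK' : (0 : ℝ) < 2 * K := by positivity
  intro i
  obtain ⟨h1, a, h2⟩ := hF i
  refine ⟨fun b => ?_, a, ?_⟩
  · unfold ph
    rw [abs_div, abs_of_pos hK', div_le_one hK']
    exact_mod_cast h1 b
  · unfold ph
    rw [abs_div, abs_of_pos hK', div_eq_one_iff_eq hK'.ne']
    exact_mod_cast h2

lemma NN_fl {n m K : ℕ} (hK : 1 ≤ K) {F : Conf n m} (hF : InP K F) (l : Fin n) :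
    NN (ph K (fl l F)) = flS l (NN (ph K F)) := by
  funext i
  have hz := MM_sub _ _ (ph_mem hK hF)
  by_cases hi : i = l
  · subst hi
    have : blk i (ph K (fl i F)) = - blk i (ph K F) := by
      ext a
      simp [blk, ph, fl, neg_div]
    simp only [NN, flS, Function.update_self]
    rw [this, nrm_neg (hz i)]
  · have : blk i (ph K (fl l F)) = blk i (ph K F) := by
      ext a
      simp [blk, ph, fl, hi]
    simp [NN, flS, hi, this]

lemma exists_letters {m n : ℕ} [NeZero n] (hme : Even m) (hmn : m < n) :
    ∃ L : List (Fin n), (∀ i ∈ L, i ≠ 0) ∧ L.length = n * m ∧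
      ∀ i, i ≠ 0 → Odd ((L.count i).choose m) := by
  classical
  let cnt : ℕ → ℕ := fun k => if k = 0 then 0 else if k ≤ m then m + 1 else m
  let M : Multiset (Fin n) := ∑ i : Fin n, Multiset.replicate (cnt i.val) i
  have hc : ∀ i, M.count i = cnt i.val := by
    intro i
    simp only [M, Multiset.count_sum', Multiset.count_replicate]
    simp
  have hcard : M.card = n * m := by
    simp only [M, Multiset.card_sum, Multiset.card_replicate]
    rw [Fin.sum_univ_eq_sum_range cnt n]
    obtain ⟨d, rfl⟩ := Nat.exists_eq_add_of_le (Nat.succ_le_of_lt hmn)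
    rw [Finset.sum_range_add]
    have h1 : ∑ x ∈ Finset.range m.succ, cnt x = m * (m + 1) := by
      rw [Finset.sum_range_succ']
      have : ∀ x ∈ Finset.range m, cnt (x + 1) = m + 1 := by
        intro x hx
        have := Finset.mem_range.mp hx
        simp only [cnt]
        rw [if_neg (by omega), if_pos (by omega)]
      rw [Finset.sum_congr rfl this]
      simp [cnt]
    have h2 : ∑ x ∈ Finset.range d, cnt (m.succ + x) = d * m := by
      have : ∀ x ∈ Finset.range d, cnt (m.succ + x) = m := by
        intro x hx
        simp only [cnt]
        rw [if_neg (by omega), if_neg (by omega)]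
      rw [Finset.sum_congr rfl this]
      simp
    rw [h1, h2, Nat.succ_eq_add_one]
    ring
  have hcl : ∀ i, M.toList.count i = cnt i.val := by
    intro i
    rw [← hc i, ← Multiset.coe_count, Multiset.coe_toList]
  refine ⟨M.toList, ?_, ?_, ?_⟩
  · rintro i hi rfl
    have := List.count_pos_iff.mpr hi
    rw [hcl] at this
    simp [cnt] at this
  · rw [Multiset.length_toList, hcard]
  · intro i hi
    rw [hcl]
    have : i.val ≠ 0 := by
      intro h
      exact hi (Fin.ext (by simpa using h))
    simp only [cnt]
    rw [if_neg this]
    split_ifs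
    · simpa using hme.add_one
    · simp

theorem lower {m n k : ℕ} (hme : Even m) (hmn : m < n) (h : HasPlanners (RP m) n k) :
    n * m + 1 ≤ k := by
  classical
  by_contra hk
  have hk : k ≤ n * m := by omega
  haveI : NeZero n := ⟨by omega⟩
  obtain ⟨U, hUo, hUc, hUs⟩ := h
  obtain ⟨L, hL0, hLl, hLodd⟩ := exists_letters hme hmn
  have key : ∀ j : Fin L.length, ∃ P : ZMod 2 → Set (YY n m), (∀ c, IsOpen (P c)) ∧
      (∀ y c c', y ∈ P c → y ∈ P c' → c = c') ∧
      (∀ y c l, y ∈ P c → flS l y ∈ P (c + if l = L.get j ∨ l = 0 then 1 else 0)) ∧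
      (∀ h : j.val < k, ∀ y, prn y ∈ U ⟨j.val, h⟩ → ∃ c, y ∈ P c) := by
    intro j
    by_cases hj : j.val < k
    · obtain ⟨s, hs⟩ := hUs ⟨j.val, hj⟩
      obtain ⟨P, h1, h2, h3, h4⟩ := sign_sets (U ⟨j.val, hj⟩) (hUo _) s hs (L.get j)
        (hL0 _ (List.get_mem _ _))
      exact ⟨P, h1, h2, h3, fun _ => h4⟩
    · refine ⟨fun _ => ∅, ?_, ?_, ?_, ?_⟩
      · intro c; exact isOpen_empty
      · intro y c c' hc; exact absurd hc (Set.notMem_empty _)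
      · intro y c l hc; exact absurd hc (Set.notMem_empty _)
      · intro h; exact absurd h hj
  choose P hPo hPd hPf hPc using key
  let C : Fin L.length × ZMod 2 → Set (Idx n m → ℝ) := fun q => ZZ n m ∩ NN ⁻¹' (P q.1 q.2)
  have hCo : ∀ q, IsOpen (C q) := fun q =>
    NN_cont.isOpen_inter_preimage (ZZ_open n m) (hPo q.1 q.2)
  have hCc : MM n m ⊆ ⋃ q, C q := by
    intro z hz
    have : prn (NN z) ∈ ⋃ i, U i := by rw [hUc]; trivial
    obtain ⟨j, hj⟩ := Set.mem_iUnion.mp this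
    obtain ⟨c, hc⟩ := hPc ⟨j.val, by have := j.isLt; omega⟩ j.isLt (NN z) hj
    exact Set.mem_iUnion.mpr ⟨(⟨j.val, _⟩, c), MM_sub _ _ hz, hc⟩
  obtain ⟨δ, hδ, hball⟩ := lebesgue_number_lemma_of_metric (MM_compact n m) hCo hCc
  obtain ⟨K0, hK0⟩ := exists_nat_gt (1 / δ)
  obtain ⟨K, hK, hKK⟩ : ∃ K : ℕ, 1 ≤ K ∧ 1 / δ < K :=
    ⟨K0 + 1, by omega, hK0.trans (by push_cast; linarith)⟩
  have hKpos : (0 : ℝ) < K := by positivity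
  have hKδ : 1 / (2 * (K : ℝ)) < δ := by
    rw [div_lt_iff₀ (by positivity)]
    rw [div_lt_iff₀ hδ] at hKK
    nlinarith
  let g : Fin L.length → Conf n m → ZMod 2 := fun j F =>
    if hc : ∃ c, NN (ph K F) ∈ P j c then hc.choose else ref (L.get j) F
  have hg : ∀ j F c, NN (ph K F) ∈ P j c → g j F = c := by
    intro j F c hc
    have hex : ∃ c, NN (ph K F) ∈ P j c := ⟨c, hc⟩
    simp only [g]
    rw [dif_pos hex]
    exact hPd j _ _ _ hex.choose_spec hc
  have hg' : ∀ j F, (¬ ∃ c, NN (ph K F) ∈ P j c) → g j F = ref (L.get j) F := by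
    intro j F hc
    simp only [g]
    rw [dif_neg hc]
  have hTw : ∀ j, Tw' K (L.get j) (g j) := by
    intro j F hF l
    by_cases hex : ∃ c, NN (ph K F) ∈ P j c
    · obtain ⟨c, hc⟩ := hex
      rw [hg j F c hc]
      apply hg
      rw [NN_fl hK hF]
      exact hPf j _ c l hc
    · have hex' : ¬ ∃ c, NN (ph K (fl l F)) ∈ P j c := by
        rintro ⟨c, hc⟩
        rw [NN_fl hK hF] at hc
        have := hPf j _ c l hc
        rw [flS_flS] at this
        exact hex ⟨_, this⟩
      rw [hg' j F hex, hg' j _ hex']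
      exact tw'_ref hK (hL0 _ (List.get_mem _ _)) F hF l
  obtain ⟨F0, hF0, hcore⟩ := comb_core hK L hL0 hLl hLodd (List.ofFn g) (by
    rw [List.forall₂_iff_get]
    refine ⟨by simp, ?_⟩
    intro i h1 h2
    have := hTw ⟨i, h1⟩
    simpa using this)
  obtain ⟨⟨j, c⟩, hq⟩ := hball _ (ph_mem hK hF0)
  obtain ⟨G, G', hG, hG', hc, hc', hne⟩ := hcore (g j) (List.mem_ofFn.mpr ⟨j, rfl⟩)
  have hin : ∀ G, close1 F0 G → NN (ph K G) ∈ P j c := by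
    intro G hG
    refine (hq ?_).2
    rw [Metric.mem_ball, dist_pi_lt_iff hδ]
    intro p
    refine lt_of_le_of_lt ?_ hKδ
    unfold ph
    rw [Real.dist_eq, ← sub_div, abs_div, abs_of_pos (show (0 : ℝ) < 2 * K by positivity)]
    refine div_le_div_of_nonneg_right ?_ (by positivity)
    exact_mod_cast hG p
  exact hne (by rw [hg j G c (hin G hc), hg j G' c (hin G' hc')])

end

end RPTC


open unitInterval

namespace RPTC

noncomputable section

open Topology Finset

lemma rp_pathConnected {m : ℕ} (hm : 1 ≤ m) : PathConnectedSpace (RP m) := by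
  have h1 : IsPathConnected (Metric.sphere (0 : EE m) 1) := by
    apply isPathConnected_sphere _ _ zero_le_one
    rw [← Module.finrank_eq_rank]
    simp
    omega
  have : PathConnectedSpace (Sph m) := isPathConnected_iff_pathConnectedSpace.mp h1
  exact (pr_surj m).pathConnectedSpace (pr_cont m)

/-- A path from the base point to `c`. -/
def pathTo {m : ℕ} [PathConnectedSpace (RP m)] (c : RP m) : C(unitInterval, RP m) :=
  (PathConnectedSpace.somePath (pr m (bp m)) c).toContinuousMap

lemma pathTo_zero {m : ℕ} [PathConnectedSpace (RP m)] (c : RP m) : pathTo c 0 = pr m (bp m) :=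
  (PathConnectedSpace.somePath (pr m (bp m)) c).source

lemma pathTo_one {m : ℕ} [PathConnectedSpace (RP m)] (c : RP m) : pathTo c 1 = c :=
  (PathConnectedSpace.somePath (pr m (bp m)) c).target

def E0 {m : ℕ} (b : EE m) : Set (Sph m) := {x | 0 < inner ℝ (x : EE m) b}

lemma E0_open {m : ℕ} (b : EE m) : IsOpen (E0 b) :=
  isOpen_lt continuous_const (by fun_prop)

def pI : ℝ → unitInterval := Set.projIcc 0 1 zero_le_one

lemma pI_cont : Continuous pI := continuous_projIcc

lemma pI_zero : pI 0 = 0 := by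
  apply Subtype.ext; simp [pI, Set.projIcc]

lemma pI_one : pI 1 = 1 := by
  apply Subtype.ext; simp [pI, Set.projIcc]

def sgmt {m : ℕ} (b x : EE m) (τ : unitInterval) : EE m := (1 - (τ : ℝ)) • b + (τ : ℝ) • x

lemma sgmt_ne {m : ℕ} {b : EE m} {x : Sph m} (h : x ∈ E0 b) (τ : unitInterval) :
    sgmt b (x : EE m) τ ≠ 0 := by
  intro h0
  have h' : 0 < inner ℝ (x : EE m) b := h
  have h1 : inner ℝ (x : EE m) (sgmt b (x : EE m) τ) = 0 := by rw [h0, inner_zero_right]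
  unfold sgmt at h1
  have hx : ‖(x : EE m)‖ = 1 := mem_sphere_zero_iff_norm.mp x.2
  rw [inner_add_right, inner_smul_right, inner_smul_right, real_inner_self_eq_norm_sq, hx] at h1
  have h2 := τ.2.1
  have h3 := τ.2.2
  rcases eq_or_lt_of_le h2 with h4 | h4
  · rw [← h4] at h1
    linarith
  · have := mul_nonneg (sub_nonneg.mpr h3) h'.le
    linarith

/-- The basic motion in the projective space, for a locally constant center `b`. -/
def tht {m : ℕ} [PathConnectedSpace (RP m)] (b : EE m) (x : Sph m) (t : unitInterval) : RP m :=
  if (t : ℝ) ≤ 1 / 2 then pathTo (pr m (nrm b)) (pI (2 * t))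
  else pr m (nrm (sgmt b (x : EE m) (pI (2 * t - 1))))

lemma tht_cont {m : ℕ} [PathConnectedSpace (RP m)] (b : EE m) :
    Continuous fun p : E0 b × unitInterval => tht b p.1.1 p.2 := by
  unfold tht
  refine Continuous.if_le ?_ ?_ (by fun_prop) continuous_const ?_
  · exact (pathTo _).continuous.comp (pI_cont.comp (by fun_prop))
  · refine (pr_cont m).comp ?_
    have h1 : Continuous fun p : E0 b × unitInterval =>
        sgmt b (p.1.1 : EE m) (pI (2 * p.2 - 1)) := by
      have h2 : Continuous fun p : E0 b × unitInterval => ((pI (2 * p.2 - 1) : unitInterval) : ℝ) :=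
        continuous_subtype_val.comp (pI_cont.comp (by fun_prop))
      unfold sgmt
      fun_prop
    exact nrm_cont.comp_continuous h1 fun p => sgmt_ne p.1.2 _
  · intro p hp
    simp only [hp]
    rw [show (2 : ℝ) * (1 / 2) = 1 by norm_num, sub_self, pI_zero, pI_one, pathTo_one]
    simp [sgmt]

open Classical in
def Tht {m : ℕ} [PathConnectedSpace (RP m)] (b : EE m) (x : Sph m) : C(unitInterval, RP m) :=
  if h : x ∈ E0 b then
    (ContinuousMap.curry ⟨fun p : E0 b × unitInterval => tht b p.1.1 p.2, tht_cont b⟩) ⟨x, h⟩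
  else ContinuousMap.const _ (pr m (bp m))

lemma Tht_apply {m : ℕ} [PathConnectedSpace (RP m)] {b : EE m} {x : Sph m} (h : x ∈ E0 b)
    (t : unitInterval) : Tht b x t = tht b x t := by
  unfold Tht
  rw [dif_pos h]
  rfl

lemma Tht_contAt {m : ℕ} [PathConnectedSpace (RP m)] {b : EE m} {x : Sph m} (h : x ∈ E0 b) :
    ContinuousAt (Tht b) x := by
  refine ContinuousOn.continuousAt (s := E0 b) ?_ ((E0_open b).mem_nhds h)
  rw [continuousOn_iff_continuous_domRestrict]
  refine (ContinuousMap.curry ⟨fun p : E0 b × unitInterval => tht b p.1.1 p.2,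
    tht_cont b⟩).continuous.congr fun y => ?_
  simp only [Set.domRestrict_apply, Tht]
  rw [dif_pos y.2]

lemma Tht_zero {m : ℕ} [PathConnectedSpace (RP m)] (b : EE m) (x : Sph m) :
    Tht b x 0 = pr m (bp m) := by
  by_cases h : x ∈ E0 b
  · rw [Tht_apply h]
    unfold tht
    rw [if_pos (by simp)]
    simp [pI_zero, pathTo_zero]
  · unfold Tht
    rw [dif_neg h]
    rfl

lemma Tht_one {m : ℕ} [PathConnectedSpace (RP m)] {b : EE m} {x : Sph m} (h : x ∈ E0 b) :
    Tht b x 1 = pr m x := by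
  rw [Tht_apply h]
  unfold tht
  rw [if_neg (by norm_num)]
  have : (2 : ℝ) * ((1 : unitInterval) : ℝ) - 1 = 1 := by norm_num
  rw [this, pI_one]
  simp [sgmt, nrm_sph]

lemma Tht_neg {m : ℕ} [PathConnectedSpace (RP m)] (b : EE m) (x : Sph m) :
    Tht (-b) (-x) = Tht b x := by
  have hmem : -x ∈ E0 (-b) ↔ x ∈ E0 b := by
    simp [E0]
  by_cases h : x ∈ E0 b
  · have hb : b ≠ 0 := by
      rintro rfl
      simp [E0] at h
    ext t
    rw [Tht_apply h, Tht_apply (hmem.mpr h)]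
    unfold tht
    have h1 : ∀ τ, sgmt (-b) ((-x : Sph m) : EE m) τ = - sgmt b (x : EE m) τ := by
      intro τ
      simp [sgmt]
      abel
    rw [h1, nrm_neg hb, nrm_neg (sgmt_ne h _), pr_neg, pr_neg]
  · unfold Tht
    rw [dif_neg h, dif_neg (fun h' => h (hmem.mp h'))]

/-- The absolute values of the coordinates. -/
def AA {n m : ℕ} (y : YY n m) : Idx n m → ℝ := fun p => |((y p.1 : Sph m) : EE m) p.2|

lemma AA_cont {n m : ℕ} (p : Idx n m) : Continuous fun y : YY n m => AA y p := by
  unfold AA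
  have h1 : Continuous fun y : YY n m => ((y p.1 : Sph m) : EE m) :=
    continuous_subtype_val.comp (continuous_apply p.1)
  fun_prop

def IsTop {n m : ℕ} (k : ℕ) (A : Idx n m → ℝ) (S : Finset (Idx n m)) : Prop :=
  (∀ i, ∃ a, (i, a) ∈ S) ∧ S.card = n + k ∧ ∀ p ∈ S, 0 < A p ∧ ∀ q, q ∉ S → A q < A p

lemma IsTop.unique {n m k : ℕ} {A : Idx n m → ℝ} {S T : Finset (Idx n m)} (hS : IsTop k A S)
    (hT : IsTop k A T) : S = T := by
  by_contra hne
  have hc : S.card = T.card := hS.2.1.trans hT.2.1.symm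
  have h1 : ¬ S ⊆ T := fun h => hne (Finset.eq_of_subset_of_card_le h hc.ge)
  have h2 : ¬ T ⊆ S := fun h => hne (Finset.eq_of_subset_of_card_le h hc.le).symm
  obtain ⟨p, hp, hp'⟩ := Finset.not_subset.mp h1
  obtain ⟨q, hq, hq'⟩ := Finset.not_subset.mp h2
  exact lt_asymm ((hS.2.2 p hp).2 q hq') ((hT.2.2 q hq).2 p hp')

open Classical in
def Sof {n m : ℕ} (k : ℕ) (A : Idx n m → ℝ) : Finset (Idx n m) :=
  if h : ∃ S, IsTop k A S then h.choose else ∅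

lemma Sof_eq {n m k : ℕ} {A : Idx n m → ℝ} {S : Finset (Idx n m)} (hS : IsTop k A S) :
    Sof k A = S := by
  have h : ∃ S, IsTop k A S := ⟨S, hS⟩
  unfold Sof
  rw [dif_pos h]
  exact h.choose_spec.unique hS

lemma isTop_open {n m : ℕ} (k : ℕ) (S : Finset (Idx n m)) :
    IsOpen {y : YY n m | IsTop k (AA y) S} := by
  by_cases h : (∀ i, ∃ a, (i, a) ∈ S) ∧ S.card = n + k
  · have : {y : YY n m | IsTop k (AA y) S} = ⋂ p ∈ S, ({y | 0 < AA y p} ∩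
        ⋂ q ∈ (Sᶜ : Finset _), {y | AA y q < AA y p}) := by
      ext y
      simp only [IsTop, h.1, h.2, implies_true, true_and, Set.mem_iInter, Set.mem_inter_iff,
        Set.mem_ofPred_eq, Finset.mem_compl]
    rw [this]
    refine isOpen_biInter_finset fun p _ => IsOpen.inter ?_ (isOpen_biInter_finset fun q _ => ?_)
    · exact isOpen_lt continuous_const (AA_cont p)
    · exact isOpen_lt (AA_cont q) (AA_cont p)
  · have : {y : YY n m | IsTop k (AA y) S} = ∅ := by
      ext y
      simp only [Set.mem_ofPred_eq, Set.mem_empty_iff_false, iff_false]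
      intro hy
      exact h ⟨hy.1, hy.2.1⟩
    rw [this]
    exact isOpen_empty

open Classical in
/-- The sign vector. -/
def bb {n m : ℕ} (S : Finset (Idx n m)) (i : Fin n) (x : Sph m) : EE m :=
  WithLp.toLp 2 fun a => if (i, a) ∈ S then ((SignType.sign ((x : EE m) a) : SignType) : ℝ) else 0

lemma bb_neg {n m : ℕ} (S : Finset (Idx n m)) (i : Fin n) (x : Sph m) :
    bb S i (-x) = - bb S i x := by
  ext a
  simp only [bb, PiLp.neg_apply, PiLp.toLp_apply]
  split_ifs
  · change ((SignType.sign ((-(x : EE m)) a) : SignType) : ℝ) = _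
    rw [PiLp.neg_apply, Left.sign_neg]
    simp
  · simp

lemma bb_mem {n m k : ℕ} {S : Finset (Idx n m)} {y : YY n m} (hS : IsTop k (AA y) S) (i : Fin n) :
    y i ∈ E0 (bb S i (y i)) := by
  classical
  change 0 < inner ℝ ((y i : Sph m) : EE m) (bb S i (y i))
  rw [PiLp.inner_apply]
  have hterm : ∀ a, inner ℝ (((y i : Sph m) : EE m) a) (bb S i (y i) a)
      = if (i, a) ∈ S then AA y (i, a) else 0 := by
    intro a
    simp only [bb, AA, PiLp.toLp_apply]
    split_ifs
    · simp
    · simp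
  simp only [hterm]
  obtain ⟨a, ha⟩ := hS.1 i
  refine Finset.sum_pos' ?_ ⟨a, mem_univ _, ?_⟩
  · intro a _
    split_ifs
    · exact abs_nonneg _
    · exact le_rfl
  · rw [if_pos ha]
    exact (hS.2.2 _ ha).1

lemma bb_eventually {n m k : ℕ} {S : Finset (Idx n m)} {y : YY n m} (hS : IsTop k (AA y) S)
    (i : Fin n) : ∀ᶠ z in 𝓝 y, bb S i (z i) = bb S i (y i) := by
  classical
  have h : ∀ a, ∀ᶠ z in 𝓝 y, bb S i (z i) a = bb S i (y i) a := by
    intro a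
    by_cases ha : (i, a) ∈ S
    · have hne : ((y i : Sph m) : EE m) a ≠ 0 := by
        have := (hS.2.2 _ ha).1
        simpa [AA] using this
      have hc : Continuous fun z : YY n m => ((z i : Sph m) : EE m) a := by
        have h1 : Continuous fun y : YY n m => ((y i : Sph m) : EE m) :=
          continuous_subtype_val.comp (continuous_apply i)
        fun_prop
      have h2 := (ContinuousAt.comp (f := fun z : YY n m => ((z i : Sph m) : EE m) a) (x := y)
        (continuousAt_sign_of_ne_zero hne) hc.continuousAt)
      have h3 := h2.eventually ((isOpen_discrete
        {SignType.sign (((y i : Sph m) : EE m) a)}).mem_nhds rfl)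
      filter_upwards [h3] with z hz
      simp only [bb, PiLp.toLp_apply, if_pos ha]
      exact congrArg _ hz
    · exact Filter.Eventually.of_forall fun z => by simp [bb, ha]
  filter_upwards [Filter.eventually_all.mpr h] with z hz
  ext a
  exact hz a

def sig {n m : ℕ} [PathConnectedSpace (RP m)] (k : ℕ) (y : YY n m) :
    Fin n → C(unitInterval, RP m) :=
  fun i => Tht (bb (Sof k (AA y)) i (y i)) (y i)

lemma sig_contAt {n m k : ℕ} [PathConnectedSpace (RP m)] {y : YY n m} {S : Finset (Idx n m)}
    (hS : IsTop k (AA y) S) : ContinuousAt (sig k) y := by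
  rw [continuousAt_pi]
  intro i
  have h1 : ContinuousAt (fun z : YY n m => Tht (bb S i (y i)) (z i)) y :=
    ContinuousAt.comp (f := fun z : YY n m => z i) (Tht_contAt (bb_mem hS i))
      (continuous_apply i).continuousAt
  refine h1.congr ?_
  have hopen : ∀ᶠ z in 𝓝 y, IsTop k (AA z) S := (isTop_open k S).mem_nhds hS
  filter_upwards [bb_eventually hS i, hopen] with z hz hz2
  simp only [sig]
  rw [Sof_eq hz2, hz]

lemma AA_eq {n m : ℕ} {y z : YY n m} (h : prn y = prn z) : AA y = AA z := by
  funext p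
  rcases pr_eq_iff.mp (congrFun h p.1) with h | h
  · simp only [AA]; rw [h]
  · simp only [AA]; rw [h]
    change |(-((z p.1 : Sph m) : EE m)) p.2| = _
    simp

lemma sig_eq {n m k : ℕ} [PathConnectedSpace (RP m)] {y z : YY n m} (h : prn y = prn z) :
    sig k y = sig k z := by
  funext i
  simp only [sig]
  rw [AA_eq h]
  rcases pr_eq_iff.mp (congrFun h i) with h | h
  · rw [h]
  · rw [h, bb_neg, Tht_neg]

lemma prn_oq (n m : ℕ) : IsOpenQuotientMap (prn : YY n m → Fin n → RP m) :=
  IsOpenQuotientMap.piMap fun _ => pr_oq m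

def lft {n m : ℕ} (x : Fin n → RP m) : YY n m := Function.surjInv (prn_oq n m).surjective x

lemma prn_lft {n m : ℕ} (x : Fin n → RP m) : prn (lft x) = x := Function.surjInv_eq _ x

lemma isTop_perm {n m k : ℕ} {y : YY n m} {S : Finset (Idx n m)} (hS : IsTop k (AA y) S)
    (sg : Equiv.Perm (Fin n)) :
    IsTop k (AA (permTuple sg y)) (S.map (Equiv.prodCongr sg.symm (Equiv.refl _)).toEmbedding) := by
  have hmem : ∀ p : Idx n m, p ∈ S.map (Equiv.prodCongr sg.symm (Equiv.refl _)).toEmbedding ↔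
      (sg p.1, p.2) ∈ S := by
    intro p
    rw [Finset.mem_map_equiv]
    rfl
  have hA : ∀ p, AA (permTuple sg y) p = AA y (sg p.1, p.2) := fun p => rfl
  refine ⟨fun i => ?_, by rw [Finset.card_map]; exact hS.2.1, fun p hp => ?_⟩
  · obtain ⟨a, ha⟩ := hS.1 (sg i)
    exact ⟨a, (hmem _).mpr ha⟩
  · rw [hmem] at hp
    refine ⟨(hS.2.2 _ hp).1, fun q hq => ?_⟩
    rw [hmem] at hq
    exact (hS.2.2 _ hp).2 _ hq

lemma sig_perm {n m k : ℕ} [PathConnectedSpace (RP m)] {y : YY n m} {S : Finset (Idx n m)}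
    (hS : IsTop k (AA y) S) (sg : Equiv.Perm (Fin n)) :
    sig k (permTuple sg y) = permTuple sg (sig k y) := by
  funext i
  simp only [sig, permTuple]
  have h1 := Sof_eq (isTop_perm hS sg)
  have h2 := Sof_eq hS
  change Tht (bb (Sof k (AA (permTuple sg y))) i (y (sg i))) (y (sg i)) = _
  rw [h1, h2]
  congr 1
  ext a
  simp only [bb, PiLp.toLp_apply]
  refine if_congr ?_ rfl rfl
  rw [Finset.mem_map_equiv]
  rfl

lemma exists_top {n m : ℕ} (y : YY n m) : ∃ k : Fin (n * m + 1), ∃ S, IsTop k.val (AA y) S := by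
  classical
  let S : Finset (Idx n m) := univ.filter fun p => 0 < AA y p
  have hmem : ∀ p, p ∈ S ↔ 0 < AA y p := by intro p; simp [S]
  have hgood : ∀ i, ∃ a, (i, a) ∈ S := by
    intro i
    by_contra hc
    push Not at hc
    have h0 : ((y i : Sph m) : EE m) = 0 := by
      ext a
      have := hc a
      rw [hmem] at this
      simpa [AA] using this
    have hx : ‖((y i : Sph m) : EE m)‖ = 1 := mem_sphere_zero_iff_norm.mp (y i).2
    rw [h0] at hx
    simp at hx
  have hge : n ≤ S.card := by
    have h1 : S.image Prod.fst = univ := by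
      ext i
      obtain ⟨a, ha⟩ := hgood i
      simp only [mem_image, mem_univ, iff_true]
      exact ⟨_, ha, rfl⟩
    have h2 := Finset.card_image_le (s := S) (f := Prod.fst)
    rw [h1] at h2
    simpa using h2
  have hle : S.card ≤ n * (m + 1) := by
    have := Finset.card_le_univ S
    simpa using this
  have hle' : S.card ≤ n * m + n := by rw [Nat.mul_succ] at hle; exact hle
  refine ⟨⟨S.card - n, by omega⟩, S, hgood, by simp only; omega, fun p hp => ⟨(hmem p).mp hp, ?_⟩⟩
  intro q hq
  rw [hmem] at hq hp
  exact lt_of_le_of_lt (not_lt.mp hq) hp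

theorem upper {m : ℕ} (n : ℕ) (hm : 1 ≤ m) : HasSymPlanners (RP m) n (n * m + 1) := by
  classical
  have := rp_pathConnected hm
  let U : Fin (n * m + 1) → Set (Fin n → RP m) := fun k => {x | ∃ S, IsTop k.val (AA (lft x)) S}
  have hU : ∀ k (y : YY n m), prn y ∈ U k ↔ ∃ S, IsTop k.val (AA y) S := by
    intro k y
    simp only [U, Set.mem_ofPred_eq]
    rw [AA_eq (prn_lft (prn y))]
  have hs : ∀ (k : ℕ) (y : YY n m), sig k (lft (prn y)) = sig k y := fun k y =>
    sig_eq (prn_lft (prn y))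
  have hperm : ∀ (sg : Equiv.Perm (Fin n)) (x : Fin n → RP m),
      prn (permTuple sg (lft x)) = permTuple sg x := by
    intro sg x
    funext i
    exact congrFun (prn_lft x) (sg i)
  refine ⟨U, ?_, ?_, ?_, ?_⟩
  · intro k
    rw [← (prn_oq n m).isQuotientMap.isOpen_preimage]
    have : prn ⁻¹' (U k) = ⋃ S, {y : YY n m | IsTop k.val (AA y) S} := by
      ext y
      rw [Set.mem_preimage, hU]
      simp
    rw [this]
    exact isOpen_iUnion fun S => isTop_open _ S
  · ext x
    simp only [Set.mem_iUnion, Set.mem_univ, iff_true]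
    exact exists_top (lft x)
  · rintro k sg x ⟨S, hS⟩
    rw [← hperm, hU]
    exact ⟨_, isTop_perm hS sg⟩
  · intro k
    refine ⟨⟨fun x => sig k.val (lft x.1), ?_⟩, ?_, ?_, ?_⟩
    · rw [continuous_iff_continuousAt]
      intro x
      obtain ⟨S, hS⟩ := x.2
      refine ContinuousAt.comp (f := fun x : U k => x.1) (g := fun x => sig k.val (lft x)) ?_
        continuous_subtype_val.continuousAt
      have h1 : ContinuousAt ((fun x => sig k.val (lft x)) ∘ prn) (lft x.1) := by
        have : ((fun x => sig k.val (lft x)) ∘ prn : YY n m → _) = sig k.val := by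
          funext y
          exact hs _ y
        rw [this]
        exact sig_contAt hS
      rw [(prn_oq n m).continuousAt_comp_iff, prn_lft] at h1
      exact h1
    · intro x j j'
      simp only [ContinuousMap.coe_mk, sig]
      rw [Tht_zero, Tht_zero]
    · intro x j
      obtain ⟨S, hS⟩ := x.2
      simp only [ContinuousMap.coe_mk, sig]
      rw [Sof_eq hS, Tht_one (bb_mem hS j)]
      exact congrFun (prn_lft x.1) j
    · intro x sg hx
      obtain ⟨S, hS⟩ := x.2
      simp only [ContinuousMap.coe_mk]
      rw [← sig_perm hS sg, ← hs _ (permTuple sg (lft x.1)), hperm]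

end

end RPTC


open unitInterval

namespace RPTC

noncomputable section

open Topology

/-- Distance of `t(n-1)` to the index `j`. -/
def dd (n : ℕ) (j : Fin n) (t : unitInterval) : ℝ := |(t : ℝ) * ((n : ℝ) - 1) - (j : ℝ)|

lemma dd_cont (n : ℕ) (j : Fin n) : Continuous (dd n j) := by
  unfold dd
  fun_prop

lemma exists_near {n : ℕ} (hn : 1 ≤ n) (t : unitInterval) : ∃ j : Fin n, dd n j t ≤ 1 / 2 := by
  have hn' : (1 : ℝ) ≤ n := by exact_mod_cast hn
  have h0 : 0 ≤ (t : ℝ) * ((n : ℝ) - 1) := mul_nonneg t.2.1 (by linarith)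
  have h1 : (t : ℝ) * ((n : ℝ) - 1) ≤ n - 1 := by
    have := mul_le_mul_of_nonneg_right t.2.2 (show (0 : ℝ) ≤ (n : ℝ) - 1 by linarith)
    linarith
  set u := (t : ℝ) * ((n : ℝ) - 1) with hu
  have f1 : (⌊u + 1 / 2⌋₊ : ℝ) ≤ u + 1 / 2 := Nat.floor_le (by linarith)
  have f2 : u + 1 / 2 < ⌊u + 1 / 2⌋₊ + 1 := Nat.lt_floor_add_one _
  have hlt : ⌊u + 1 / 2⌋₊ < n := by
    have : (⌊u + 1 / 2⌋₊ : ℝ) < n := by linarith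
    exact_mod_cast this
  refine ⟨⟨_, hlt⟩, ?_⟩
  unfold dd
  rw [← hu, abs_le]
  constructor <;> simp only <;> linarith

lemma near_unique {n : ℕ} {t : unitInterval} {j j' : Fin n} (h : dd n j t ≤ 1 / 2)
    (h' : dd n j' t ≤ 1 / 2) (hne : j ≠ j') : dd n j t = 1 / 2 ∧ dd n j' t = 1 / 2 := by
  have key : (1 : ℝ) ≤ |(j : ℝ) - (j' : ℝ)| := by
    have hne' : (j.val : ℤ) - j'.val ≠ 0 := by
      intro h
      exact hne (Fin.ext (by omega))
    have := Int.one_le_abs hne'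
    exact_mod_cast this
  have tri : |(j : ℝ) - (j' : ℝ)| ≤ dd n j t + dd n j' t := by
    unfold dd
    have := abs_sub_le (j : ℝ) ((t : ℝ) * ((n : ℝ) - 1)) (j' : ℝ)
    rw [abs_sub_comm (j : ℝ) ((t : ℝ) * ((n : ℝ) - 1))] at this
    exact this
  constructor <;> linarith

lemma dd_rev {n : ℕ} (j : Fin n) (t : unitInterval) : dd n j.rev (σ t) = dd n j t := by
  unfold dd
  rw [unitInterval.coe_symm_eq, Fin.val_rev]
  have : j.val + 1 ≤ n := j.isLt
  rw [Nat.cast_sub this, ← abs_neg]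
  congr 1
  push_cast
  ring

lemma dd_evalPt {n : ℕ} (hn : 2 ≤ n) (j : Fin n) : dd n j (evalPt n j) = 0 := by
  have hn' : (2 : ℝ) ≤ n := by exact_mod_cast hn
  unfold dd evalPt
  have : (n : ℝ) - 1 ≠ 0 := by linarith
  simp only
  rw [div_mul_cancel₀ _ this]
  simp

theorem bidir_of_sym {X : Type*} [TopologicalSpace X] {n k : ℕ} (hn : 2 ≤ n)
    (h : HasSymPlanners X n k) : HasBidirPlanners X n k := by
  classical
  obtain ⟨U, hUo, hUc, hUi, hUs⟩ := h
  have hr : ∀ x : Fin n → X, rtuple x = permTuple Fin.revPerm x := fun x => rfl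
  refine ⟨U, hUo, hUc, fun i x hx => by rw [hr]; exact hUi i _ x hx, fun i => ?_⟩
  obtain ⟨s, hs0, hs1, hse⟩ := hUs i
  choose J hJ using exists_near (n := n) (by omega)
  let g : U i × unitInterval → X := fun p => s p.1 (J p.2) (pI (1 - 2 * dd n (J p.2) p.2))
  have hg : ∀ x t j, dd n j t ≤ 1 / 2 → g (x, t) = s x j (pI (1 - 2 * dd n j t)) := by
    intro x t j hj
    simp only [g]
    by_cases hjj : J t = j
    · rw [hjj]
    · obtain ⟨h1, h2⟩ := near_unique (hJ t) hj hjj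
      rw [h1, h2, show (1 : ℝ) - 2 * (1 / 2) = 0 by norm_num, pI_zero]
      exact hs0 x _ _
  have hgc : Continuous g := by
    refine LocallyFinite.continuous (f := fun j : Fin n => {p : U i × unitInterval |
      dd n j p.2 ≤ 1 / 2}) (locallyFinite_of_finite _) ?_ ?_ ?_
    · ext p
      simp only [Set.mem_iUnion, Set.mem_univ, iff_true]
      exact ⟨J p.2, hJ p.2⟩
    · intro j
      exact isClosed_le ((dd_cont n j).comp continuous_snd) continuous_const
    · intro j
      have hc : Continuous fun p : U i × unitInterval => s p.1 j (pI (1 - 2 * dd n j p.2)) := by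
        have h1 : Continuous fun p : U i × unitInterval => s p.1 j :=
          (continuous_apply j).comp (s.continuous.comp continuous_fst)
        have h2 : Continuous fun p : U i × unitInterval => pI (1 - 2 * dd n j p.2) := by
          refine pI_cont.comp ?_
          have := (dd_cont n j).comp (continuous_snd (X := U i) (Y := unitInterval))
          exact continuous_const.sub (continuous_const.mul this)
        exact continuous_eval.comp (h1.prodMk h2)
      refine hc.continuousOn.congr ?_
      rintro ⟨x, t⟩ hp
      exact hg x t j hp
  refine ⟨ContinuousMap.curry ⟨g, hgc⟩, ?_, ?_⟩
  · intro x j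
    change g (x, evalPt n j) = _
    rw [hg x _ j (by rw [dd_evalPt hn]; norm_num), dd_evalPt hn]
    rw [mul_zero, sub_zero, pI_one]
    exact hs1 x j
  · intro x hx
    ext t
    change g (⟨rtuple x.1, hx⟩, t) = g (x, σ t)
    rw [hg x (σ t) (J t).rev (by rw [dd_rev]; exact hJ t), dd_rev]
    have := hse x Fin.revPerm hx
    change s ⟨permTuple Fin.revPerm x.1, hx⟩ (J t) _ = _
    rw [this]
    rfl

theorem plain_of_bidir {X : Type*} [TopologicalSpace X] {n k : ℕ}
    (h : HasBidirPlanners X n k) : HasPlanners X n k := by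
  obtain ⟨U, hUo, hUc, -, hUs⟩ := h
  refine ⟨U, hUo, hUc, fun i => ?_⟩
  obtain ⟨s, hs, -⟩ := hUs i
  exact ⟨s, hs⟩

lemma sInf_val {P : ℕ → Prop} {N : ℕ} (h : P N) (hl : ∀ k, P k → N ≤ k) :
    sInf {k : ℕ∞ | ∃ m : ℕ, (m : ℕ∞) = k ∧ P m} = (N : ℕ∞) := by
  refine le_antisymm (sInf_le ⟨N, rfl, h⟩) (le_sInf ?_)
  rintro _ ⟨k, rfl, hk⟩
  exact_mod_cast hl k hk

end

end RPTC

/-- For every even `m ≥ 2` and every `n > m`,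
`TC_n(ℝP^m) = TC^β_n(ℝP^m) = TC^Σ_n(ℝP^m) = nm + 1`. -/
theorem TC_TCbeta_TCsym_projective_space (m n : ℕ) (hm : 2 ≤ m) (hme : Even m)
    (hmn : m < n) :
    TCn (RP m) n = ((n * m + 1 : ℕ) : ℕ∞) ∧
    TCbeta (RP m) n = ((n * m + 1 : ℕ) : ℕ∞) ∧
    TCsym (RP m) n = ((n * m + 1 : ℕ) : ℕ∞) := by
  have hn : 2 ≤ n := by omega
  have hS := RPTC.upper (m := m) n (by omega)
  have hB := RPTC.bidir_of_sym hn hS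
  have hP := RPTC.plain_of_bidir hB
  have hl : ∀ k, HasPlanners (RP m) n k → n * m + 1 ≤ k := fun k h => RPTC.lower hme hmn h
  refine ⟨RPTC.sInf_val hP hl, RPTC.sInf_val hB ?_, RPTC.sInf_val hS ?_⟩
  · exact fun k h => hl k (RPTC.plain_of_bidir h)
  · exact fun k h => hl k (RPTC.plain_of_bidir (RPTC.bidir_of_sym hn h))
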